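/- (Lemma 2) Let μ be as in the class {μ} and let M = M_μ be the associated function. Then there exist constants c₀ ∈ ℝ and C > 0 (with C absolute, not depending on μ) such that for all sufficiently large y: |∫₀^{M(y)} |ζ(1/2+it)|² dt − F(y)| ≤ C (ln y)/y, where F(y) = (y/2) ln(y/2) + (c − ln(2π)) (y/2) + c₀ and c is the Euler–Mascheroni constant. -/

import Mathlib

open MeasureTheory Filter Real Set

/-- `Z(t)² = |ζ(1/2 + it)|²`, the square of Hardy's function. -/
noncomputable def Z2 (t : ℝ) : ℝ := ‖riemannZeta (1/2 + t * Complex.I)‖ ^ 2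

/-!
Let `B z = 1 / (e ^ z - 1)` and `φ z = B z - 1 / z`, so that `φ` has Mellin transform `Γ ζ` on the
strip `0 < re s < 1`. By the reflection formula for `Γ`, Mellin inversion on the critical line gives
`∫ v in (0, ∞), φ v * φ (x * v) = ∫ t, x ^ (-(1/2) - i t) * |ζ (1/2 + i t)|² / (2 * cosh (π t))`.
On the other hand `B z * B w = B (z + w) * (1 + B z + B w)` evaluates the left side as elementary
terms plus the integrals `X p = ∫ z in (0, ∞), B z * (φ (p * z) + 1 / 2)` at `p = 1 + x` and
`p = 1 + 1 / x`.

Put `x = exp (2 η)` and continue analytically from real `η` to `η = i θ` with `θ = π / 2 - δ`. The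
weight `cosh (2 θ t) / cosh (π t)` differs from `exp (-2 δ t)` by `O(δ exp (-π t))`, while
`1 + x = O(δ)` and `X p = O(p)` there, so the elementary terms give the Laplace transform of
`|ζ (1/2 + i t)|²` at `2 δ` up to `O(δ log (1 / δ))`. Take `δ = 1 / y`; truncating the integral at
`5 * y * log y` costs only `O(1 / y)`, and the constant term is `c₀ = π`.
-/

namespace HardyLittlewood

section Integration

lemma one_add_pow_mul_exp_le (n : ℕ) {c u : ℝ} (hc : 0 < c) (hu : 0 ≤ u) :
    (1 + u) ^ n * exp (-c * u) ≤
      (n + 2).factorial * exp c / c ^ (n + 2) * (1 + u ^ 2)⁻¹ := by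
  have hexp := pow_div_factorial_le_exp (c * (1 + u)) (by positivity) (n + 2)
  rw [div_le_iff₀ (by positivity), mul_pow] at hexp
  rw [← div_eq_mul_inv, le_div_iff₀ (by positivity), le_div_iff₀ (by positivity)]
  calc (1 + u) ^ n * exp (-c * u) * (1 + u ^ 2) * c ^ (n + 2)
      ≤ (1 + u) ^ n * exp (-c * u) * (1 + u) ^ 2 * c ^ (n + 2) := by
        gcongr
        nlinarith
    _ = c ^ (n + 2) * (1 + u) ^ (n + 2) * exp (-c * u) := by ring
    _ ≤ exp (c * (1 + u)) * (n + 2).factorial * exp (-c * u) := by gcongr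
    _ = (n + 2).factorial * (exp (c * (1 + u)) * exp (-c * u)) := by ring
    _ = (n + 2).factorial * exp c := by
        rw [← exp_add]
        ring_nf

lemma integrable_one_add_abs_pow_mul_exp (n : ℕ) {c : ℝ} (hc : 0 < c) :
    Integrable fun t : ℝ ↦ (1 + |t|) ^ n * exp (-c * |t|) := by
  refine (integrable_inv_one_add_sq.const_mul
    ((n + 2).factorial * exp c / c ^ (n + 2))).mono' (by fun_prop) (.of_forall fun t ↦ ?_)
  rw [norm_of_nonneg (by positivity), ← sq_abs t]
  exact one_add_pow_mul_exp_le n hc (abs_nonneg t)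

variable {E : Type*} [NormedAddCommGroup E] [NormedSpace ℝ E]

/-- `f` is integrable on `(0, ∞)` with integral `a`. -/
def HasIntegralIoi (f : ℝ → E) (a : E) : Prop :=
  IntegrableOn f (Ioi 0) ∧ ∫ z in Ioi (0 : ℝ), f z = a

lemma HasIntegralIoi.add {f g : ℝ → E} {a b : E} (hf : HasIntegralIoi f a)
    (hg : HasIntegralIoi g b) : HasIntegralIoi (fun z ↦ f z + g z) (a + b) :=
  ⟨hf.1.add hg.1, by rw [integral_add hf.1 hg.1, hf.2, hg.2]⟩

lemma HasIntegralIoi.const_mul {f : ℝ → ℂ} {a : ℂ} (hf : HasIntegralIoi f a) (c : ℂ) :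
    HasIntegralIoi (fun z ↦ c * f z) (c * a) :=
  ⟨hf.1.const_mul c, by rw [integral_const_mul, hf.2]⟩

lemma HasIntegralIoi.comp_mul_left {f : ℝ → E} {a : E} (hf : HasIntegralIoi f a) {c : ℝ}
    (hc : 0 < c) : HasIntegralIoi (fun z ↦ f (c * z)) (c⁻¹ • a) :=
  ⟨(integrableOn_Ioi_comp_mul_left_iff f 0 hc).mpr (by simpa using hf.1), by
    rw [integral_comp_mul_left_Ioi f 0 hc, mul_zero, hf.2]⟩

lemma HasIntegralIoi.ofReal {f : ℝ → ℝ} {a : ℝ} (hf : HasIntegralIoi f a) :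
    HasIntegralIoi (fun z ↦ (f z : ℂ)) (a : ℂ) :=
  ⟨hf.1.ofReal, by rw [integral_complex_ofReal, hf.2]⟩

lemma integrableOn_inv_mul_exp_sub_exp {a b : ℝ} (ha : 0 < a) (hb : 0 < b) :
    IntegrableOn (fun z : ℝ ↦ z⁻¹ * (exp (-(a * z)) - exp (-(b * z)))) (Ioi 0) := by
  wlog hab : a ≤ b generalizing a b
  · exact (this hb ha (le_of_not_ge hab)).neg.congr (.of_forall fun z ↦ by simp; ring)
  refine ((integrableOn_exp_mul_Ioi (neg_lt_zero.mpr ha) 0).const_mul (b - a)).mono'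
    (Measurable.aestronglyMeasurable (by fun_prop)) ?_
  filter_upwards [ae_restrict_mem measurableSet_Ioi] with z (hz : 0 < z)
  have hsplit : exp (-(b * z)) = exp (-(a * z)) * exp (-((b - a) * z)) := by
    rw [← exp_add]
    ring_nf
  have hle : exp (-((b - a) * z)) ≤ 1 := exp_le_one_iff.mpr (by nlinarith)
  have hge := add_one_le_exp (-((b - a) * z))
  have hpos := exp_pos (-(a * z))
  rw [norm_mul, norm_inv, norm_of_nonneg hz.le, inv_mul_le_iff₀ hz,
    norm_of_nonneg (by rw [hsplit]; nlinarith), hsplit, neg_mul]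
  nlinarith

lemma hasIntegralIoi_frullani_exp {a b : ℝ} (ha : 0 < a) (hb : 0 < b) :
    HasIntegralIoi (fun z : ℝ ↦ z⁻¹ * (exp (-(a * z)) - exp (-(b * z)))) (log (b / a)) := by
  have hint := integrableOn_inv_mul_exp_sub_exp ha hb
  refine ⟨hint, ?_⟩
  have hcont : Continuous fun x : ℝ ↦ exp (-x) := by fun_prop
  have hzero : Tendsto (fun x : ℝ ↦ exp (-x)) (nhdsWithin 0 (Ioi 0)) (nhds 1) := by
    simpa using (hcont.tendsto 0).mono_left nhdsWithin_le_nhds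
  simpa using Frullani.integral_Ioi_eq (hcont.locallyIntegrable.locallyIntegrableOn _) ha hb
    hzero tendsto_exp_neg_atTop_nhds_zero hint

end Integration

section Holomorphy

variable {E : Type*} [NormedAddCommGroup E] [NormedSpace ℂ E]

lemma isOpen_re_gt (a : ℝ) : IsOpen {s : ℂ | a < s.re} :=
  isOpen_lt continuous_const Complex.continuous_re

lemma eqOn_re_gt_of_eqOn_re_gt [CompleteSpace E] {f g : ℂ → E} {a b : ℝ}
    (hf : DifferentiableOn ℂ f {s | a < s.re}) (hg : DifferentiableOn ℂ g {s | a < s.re})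
    (h : EqOn f g {s | b < s.re}) : EqOn f g {s | a < s.re} := by
  have hmem (c : ℝ) (hc : c ≤ max a b) : (((max a b + 1 : ℝ)) : ℂ) ∈ {s : ℂ | c < s.re} := by
    simpa using hc.trans_lt (lt_add_one _)
  refine (hf.analyticOnNhd (isOpen_re_gt a)).eqOn_of_preconnected_of_eventuallyEq
    (hg.analyticOnNhd (isOpen_re_gt a)) (convex_halfSpace_re_gt a).isPreconnected
    (hmem a (le_max_left a b)) ?_
  exact h.eventuallyEq_of_mem ((isOpen_re_gt b).mem_nhds (hmem b (le_max_right a b)))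

variable {α : Type*} [MeasurableSpace α] {μ : Measure α}

lemma aestronglyMeasurable_deriv_param {F : ℂ → α → E} {z₀ : ℂ}
    (hmeas : ∀ᶠ z in nhds z₀, AEStronglyMeasurable (F z) μ)
    (hdiff : ∀ᵐ a ∂μ, DifferentiableAt ℂ (fun z ↦ F z a) z₀) :
    AEStronglyMeasurable (fun a ↦ deriv (fun z ↦ F z a) z₀) μ := by
  obtain ⟨u, hu⟩ := exists_seq_tendsto (nhdsWithin z₀ {z₀}ᶜ)
  obtain ⟨N, hN⟩ := eventually_atTop.mp ((tendsto_nhds_of_tendsto_nhdsWithin hu).eventually hmeas)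
  refine aestronglyMeasurable_of_tendsto_ae atTop
    (f := fun n a ↦ slope (fun z ↦ F z a) z₀ (u (n + N))) (fun n ↦ ?_) ?_
  · exact ((hN _ le_add_self).sub hmeas.self_of_nhds).const_smul (u (n + N) - z₀)⁻¹
  · filter_upwards [hdiff] with a ha
    exact (hasDerivAt_iff_tendsto_slope.mp ha.hasDerivAt).comp
      ((tendsto_add_atTop_iff_nat N).mpr hu)

lemma norm_deriv_le_of_forall_mem_ball {f : ℂ → E} {z₀ z : ℂ} {r B : ℝ} (hr : 0 < r)
    (hf : DifferentiableOn ℂ f (Metric.ball z₀ (r + r)))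
    (hB : ∀ w ∈ Metric.ball z₀ (r + r), ‖f w‖ ≤ B) (hz : z ∈ Metric.ball z₀ r) :
    ‖deriv f z‖ ≤ B / r := by
  have hsub : Metric.closedBall z r ⊆ Metric.ball z₀ (r + r) :=
    Metric.closedBall_subset_ball' (by linarith [Metric.mem_ball.mp hz])
  refine Complex.norm_deriv_le_of_forall_mem_sphere_norm_le hr ?_
    fun w hw ↦ hB w (hsub (Metric.sphere_subset_closedBall hw))
  exact (hf.mono ((closure_mono Metric.ball_subset_closedBall).trans
    (Metric.isClosed_closedBall.closure_eq.trans_subset hsub))).diffContOnCl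

-- Cauchy's estimate turns domination of the integrand into domination of its derivative.
lemma differentiableOn_integral_of_locally_dominated {F : ℂ → α → E} {U : Set ℂ} (hU : IsOpen U)
    (hmeas : ∀ z ∈ U, AEStronglyMeasurable (F z) μ)
    (hdiff : ∀ᵐ a ∂μ, DifferentiableOn ℂ (fun z ↦ F z a) U)
    (hdom : ∀ z₀ ∈ U, ∃ V ∈ nhds z₀, ∃ g : α → ℝ, Integrable g μ ∧
      ∀ᵐ a ∂μ, ∀ z ∈ V, ‖F z a‖ ≤ g a) :
    DifferentiableOn ℂ (fun z ↦ ∫ a, F z a ∂μ) U := by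
  intro z₀ hz₀
  obtain ⟨V, hV, g, hg, hle⟩ := hdom z₀ hz₀
  obtain ⟨ε, hε, hball⟩ := Metric.mem_nhds_iff.mp (inter_mem hV (hU.mem_nhds hz₀))
  obtain ⟨r, hr, rfl⟩ : ∃ r > 0, r + r = ε := ⟨ε / 2, half_pos hε, add_halves ε⟩
  have hmeas' : ∀ᶠ z in nhds z₀, AEStronglyMeasurable (F z) μ := by
    filter_upwards [hU.mem_nhds hz₀] using hmeas
  have hderiv := hasDerivAt_integral_of_dominated_loc_of_deriv_le (x₀ := z₀) (μ := μ) (F := F)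
    (F' := fun z a ↦ deriv (fun z ↦ F z a) z) (bound := fun a ↦ g a / r)
    (Metric.ball_mem_nhds z₀ hr) hmeas' (hg.mono' (hmeas z₀ hz₀) ?_)
    (aestronglyMeasurable_deriv_param hmeas' ?_) ?_ (hg.div_const r) ?_
  · exact hderiv.2.differentiableAt.differentiableWithinAt
  · filter_upwards [hle] with a ha using ha z₀ (mem_of_mem_nhds hV)
  · filter_upwards [hdiff] with a ha using ha.differentiableAt (hU.mem_nhds hz₀)
  · filter_upwards [hle, hdiff] with a ha hda z hz
    exact norm_deriv_le_of_forall_mem_ball hr (hda.mono fun w hw ↦ (hball hw).2)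
      (fun w hw ↦ ha w (hball hw).1) hz
  · filter_upwards [hdiff] with a ha z hz
    have hzU := (hball (Metric.ball_subset_ball (by linarith) hz)).2
    exact (ha.differentiableAt (hU.mem_nhds hzU)).hasDerivAt

end Holomorphy

section Mellin

variable {E : Type*} [NormedAddCommGroup E] [NormedSpace ℂ E]

lemma aestronglyMeasurable_of_mellinConvergent {f : ℝ → E} {s : ℂ} (hf : MellinConvergent f s) :
    AEStronglyMeasurable f (volume.restrict (Ioi 0)) := by
  have hpow : Measurable fun t : ℝ ↦ ((t : ℂ) ^ (s - 1))⁻¹ := by fun_prop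
  refine (hpow.aestronglyMeasurable.smul hf.aestronglyMeasurable).congr ?_
  filter_upwards [ae_restrict_mem measurableSet_Ioi] with t (ht : 0 < t)
  exact inv_smul_smul₀ (Complex.cpow_ne_zero_iff.mpr (.inl (Complex.ofReal_ne_zero.mpr ht.ne'))) _

lemma norm_cpow_sub_one_le {a b x z : ℝ} (hz : 0 < z) (hx : x ∈ Icc a b) :
    ‖(z : ℂ) ^ ((x : ℂ) - 1)‖ ≤ ‖(z : ℂ) ^ ((a : ℂ) - 1)‖ + ‖(z : ℂ) ^ ((b : ℂ) - 1)‖ := by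
  simp only [Complex.norm_cpow_eq_rpow_re_of_pos hz, Complex.sub_re, Complex.ofReal_re,
    Complex.one_re]
  rcases le_total z 1 with h | h
  · exact (rpow_le_rpow_of_exponent_ge hz h (by linarith [hx.1])).trans
      (le_add_of_nonneg_right (by positivity))
  · exact (rpow_le_rpow_of_exponent_le h (by linarith [hx.2])).trans
      (le_add_of_nonneg_left (by positivity))

lemma continuousOn_mellin_Icc {f : ℝ → E} {a b : ℝ} (ha : MellinConvergent f a)
    (hb : MellinConvergent f b) : ContinuousOn (fun x : ℝ ↦ mellin f x) (Icc a b) := by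
  have hfm := aestronglyMeasurable_of_mellinConvergent ha
  intro x₀ _
  refine tendsto_integral_filter_of_dominated_convergence
    (fun z ↦ ‖(z : ℂ) ^ ((a : ℂ) - 1) • f z‖ + ‖(z : ℂ) ^ ((b : ℂ) - 1) • f z‖) ?_ ?_
    (ha.norm.add hb.norm) ?_
  · refine .of_forall fun x ↦ AEStronglyMeasurable.smul ?_ hfm
    exact Measurable.aestronglyMeasurable (by fun_prop)
  · filter_upwards [self_mem_nhdsWithin] with x hx
    filter_upwards [ae_restrict_mem measurableSet_Ioi] with z hz
    simp only [norm_smul, ← add_mul]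
    gcongr
    exact norm_cpow_sub_one_le hz hx
  · filter_upwards [ae_restrict_mem measurableSet_Ioi] with z (hz : 0 < z)
    have hcont : Continuous fun x : ℝ ↦ (z : ℂ) ^ ((x : ℂ) - 1) • f z :=
      (Continuous.const_cpow (by fun_prop) (.inl (Complex.ofReal_ne_zero.mpr hz.ne'))).smul
        continuous_const
    exact hcont.continuousWithinAt

lemma mellin_one (f : ℝ → E) : mellin f 1 = ∫ z in Ioi (0 : ℝ), f z := by
  simp [mellin]

lemma mellinConvergent_one {f : ℝ → E} (hf : IntegrableOn f (Ioi 0)) : MellinConvergent f 1 := by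
  simpa [MellinConvergent] using hf

lemma mellin_indicator_Ioi (f : ℝ → E) (s : ℂ) {a : ℝ} (ha : 0 ≤ a) :
    mellin (indicator (Ioi a) f) s = ∫ t in Ioi a, (t : ℂ) ^ (s - 1) • f t := by
  simp only [mellin, ← indicator_smul (Ioi a) fun t : ℝ ↦ (t : ℂ) ^ (s - 1)]
  rw [setIntegral_indicator measurableSet_Ioi, inter_eq_right.mpr (Ioi_subset_Ioi ha)]

/-- The multiplicative correlation `x ↦ ∫ v in (0, ∞), f v * g (x * v)` of two functions on the
positive half-line. -/
noncomputable def mulCorr (f g : ℝ → ℂ) (x : ℝ) : ℂ := ∫ v in Ioi (0 : ℝ), f v * g (x * v)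

variable {f g : ℝ → ℂ} {s : ℂ}

lemma integral_norm_cpow_smul_comp_mul_right (g : ℝ → E) (s : ℂ) {v : ℝ} (hv : 0 < v) :
    ∫ x in Ioi (0 : ℝ), ‖(x : ℂ) ^ (s - 1) • g (x * v)‖ =
      ‖(v : ℂ) ^ (-s)‖ * ∫ x in Ioi (0 : ℝ), ‖(x : ℂ) ^ (s - 1) • g x‖ := by
  have hscale := integral_comp_mul_right_Ioi (fun x : ℝ ↦ ‖(x : ℂ) ^ (s - 1) • g x‖) 0 hv
  rw [zero_mul, smul_eq_mul, ← inv_mul_eq_iff_eq_mul₀ (inv_ne_zero hv.ne'), inv_inv] at hscale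
  rw [← hscale, ← mul_assoc, ← integral_const_mul]
  refine setIntegral_congr_fun measurableSet_Ioi fun x (hx : 0 < x) ↦ ?_
  simp only [norm_smul, Complex.norm_cpow_eq_rpow_re_of_pos hv,
    Complex.norm_cpow_eq_rpow_re_of_pos hx,
    Complex.norm_cpow_eq_rpow_re_of_pos (mul_pos hx hv), mul_rpow hx.le hv.le]
  have hcancel : v ^ (-s).re * v * v ^ (s - 1).re = 1 := by
    rw [← rpow_add_one hv.ne', ← rpow_add hv]
    simp
  linear_combination (-x ^ (s - 1).re * ‖g (x * v)‖) * hcancel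

lemma integrable_mellin_mulCorr (hf : Measurable f) (hg : Measurable g)
    (hfs : MellinConvergent f (1 - s)) (hgs : MellinConvergent g s) :
    Integrable (fun q : ℝ × ℝ ↦ (q.1 : ℂ) ^ (s - 1) * (f q.2 * g (q.1 * q.2)))
      ((volume.restrict (Ioi 0)).prod (volume.restrict (Ioi 0))) := by
  refine (integrable_prod_iff' (Measurable.aestronglyMeasurable (by fun_prop))).mpr ⟨?_, ?_⟩
  · filter_upwards [ae_restrict_mem measurableSet_Ioi] with v hv
    refine (((MellinConvergent.comp_mul_left hv).mpr hgs).const_mul (f v)).congr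
      (.of_forall fun x ↦ ?_)
    simp only [smul_eq_mul, mul_comm v x]
    ring
  · refine (hfs.norm.mul_const (∫ x in Ioi (0 : ℝ), ‖(x : ℂ) ^ (s - 1) • g x‖)).congr ?_
    filter_upwards [ae_restrict_mem measurableSet_Ioi] with v hv
    have hfactor (x : ℝ) : ‖(x : ℂ) ^ (s - 1) * (f v * g (x * v))‖ =
        ‖f v‖ * ‖(x : ℂ) ^ (s - 1) • g (x * v)‖ := by
      simp only [norm_mul, norm_smul]
      ring
    simp only [hfactor, integral_const_mul]
    rw [integral_norm_cpow_smul_comp_mul_right g s hv, norm_smul, sub_sub_cancel_left]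
    ring

lemma mellinConvergent_mulCorr (hf : Measurable f) (hg : Measurable g)
    (hfs : MellinConvergent f (1 - s)) (hgs : MellinConvergent g s) :
    MellinConvergent (mulCorr f g) s :=
  (integrable_mellin_mulCorr hf hg hfs hgs).integral_prod_left.congr
    (.of_forall fun x ↦ integral_const_mul ((x : ℂ) ^ (s - 1)) fun v ↦ f v * g (x * v))

lemma mellin_mulCorr (hf : Measurable f) (hg : Measurable g)
    (hfs : MellinConvergent f (1 - s)) (hgs : MellinConvergent g s) :
    mellin (mulCorr f g) s = mellin f (1 - s) * mellin g s := by
  have hinner (v : ℝ) (hv : v ∈ Ioi (0 : ℝ)) :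
      ∫ x in Ioi (0 : ℝ), (x : ℂ) ^ (s - 1) * (f v * g (x * v)) =
        (v : ℂ) ^ (1 - s - 1) • f v * mellin g s := by
    have hscale := mellin_comp_mul_left g s hv
    calc ∫ x in Ioi (0 : ℝ), (x : ℂ) ^ (s - 1) * (f v * g (x * v))
        = f v * mellin (fun x ↦ g (v * x)) s := by
          rw [mellin, ← integral_const_mul]
          simp only [smul_eq_mul, mul_comm v, mul_left_comm]
      _ = (v : ℂ) ^ (1 - s - 1) • f v * mellin g s := by
          rw [hscale, sub_sub_cancel_left, smul_eq_mul, smul_eq_mul]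
          ring
  calc mellin (mulCorr f g) s
      = ∫ x in Ioi (0 : ℝ), ∫ v in Ioi (0 : ℝ), (x : ℂ) ^ (s - 1) * (f v * g (x * v)) := by
        simp only [mellin, mulCorr, smul_eq_mul, integral_const_mul]
    _ = ∫ v in Ioi (0 : ℝ), (v : ℂ) ^ (1 - s - 1) • f v * mellin g s := by
        rw [integral_integral_swap (integrable_mellin_mulCorr hf hg hfs hgs)]
        exact setIntegral_congr_fun measurableSet_Ioi hinner
    _ = mellin f (1 - s) * mellin g s := integral_mul_const _ _

end Mellin

section Bose

/-- The Bose–Einstein function `B z = 1 / (e ^ z - 1)`, whose Mellin transform is `Γ ζ` on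
`1 < re s`. -/
noncomputable def bose (z : ℂ) : ℂ := (Complex.exp z - 1)⁻¹

/-- `φ z = B z - 1 / z`: the function `bose` with its pole at the origin removed. At `z = 0` the
value is `0` by the convention for inverses, while the limit there is `-1/2`. -/
noncomputable def boseReg (z : ℂ) : ℂ := bose z - z⁻¹

@[fun_prop]
lemma measurable_bose : Measurable bose := by
  unfold bose
  fun_prop

@[fun_prop]
lemma measurable_boseReg : Measurable boseReg :=
  measurable_bose.sub measurable_inv

lemma exp_sub_one_ne_zero_of_re_pos {w : ℂ} (hw : 0 < w.re) : Complex.exp w - 1 ≠ 0 := by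
  intro h
  have hnorm : ‖Complex.exp w‖ = 1 := by rw [sub_eq_zero.mp h, norm_one]
  rw [Complex.norm_exp, exp_eq_one_iff] at hnorm
  exact hw.ne' hnorm

lemma bose_mul_bose {z w : ℂ} (hz : 0 < z.re) (hw : 0 < w.re) :
    bose z * bose w = bose (z + w) * (1 + bose z + bose w) := by
  have hz' := exp_sub_one_ne_zero_of_re_pos hz
  have hw' := exp_sub_one_ne_zero_of_re_pos hw
  have hzw := exp_sub_one_ne_zero_of_re_pos (w := z + w) (by simpa using add_pos hz hw)
  unfold bose
  rw [Complex.exp_add] at hzw ⊢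
  field_simp
  ring

lemma bose_ofReal (t : ℝ) : bose t = ((exp t - 1)⁻¹ : ℝ) := by
  simp [bose]

lemma boseReg_ofReal (t : ℝ) : boseReg t = ((exp t - 1)⁻¹ - t⁻¹ : ℝ) := by
  simp [boseReg, bose_ofReal]

lemma norm_bose_le_inv_re {w : ℂ} (hw : 0 < w.re) : ‖bose w‖ ≤ w.re⁻¹ := by
  rw [bose, norm_inv]
  refine inv_anti₀ hw ?_
  have htriangle := norm_sub_norm_le (Complex.exp w) 1
  rw [Complex.norm_exp, norm_one] at htriangle
  linarith [add_one_le_exp w.re]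

lemma norm_bose_mul_le {t : ℝ} (ht : 0 < t) : ‖bose t‖ * t ≤ exp (-(1 / 2) * t) := by
  have hpos : 0 < exp t - 1 := by linarith [add_one_lt_exp ht.ne']
  rw [bose_ofReal, Complex.norm_real, norm_of_nonneg (by positivity), inv_mul_le_iff₀ hpos]
  have hsinh := self_le_sinh_iff.mpr (by positivity : 0 ≤ t / 2)
  have hhalf : exp t * exp (-(1 / 2) * t) = exp (t / 2) := by
    rw [← exp_add]
    ring_nf
  rw [sinh_eq, show -(t / 2) = -(1 / 2) * t by ring] at hsinh
  linarith

lemma norm_bose_le_exp {t : ℝ} (ht : 1 ≤ t) : ‖bose t‖ ≤ exp (-(1 / 2) * t) :=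
  (le_mul_of_one_le_right (norm_nonneg _) ht).trans (norm_bose_mul_le (zero_lt_one.trans_le ht))

lemma norm_div_four_le_norm_exp_sub_one {z : ℂ} (hz : ‖z‖ ≤ 1) :
    ‖z‖ / 4 ≤ ‖Complex.exp z - 1‖ := by
  have htaylor := Complex.exp_bound hz (n := 2) (by norm_num)
  norm_num [Finset.sum_range_succ, Nat.factorial] at htaylor
  have htriangle : ‖z‖ ≤ ‖Complex.exp z - 1‖ + ‖Complex.exp z - (1 + z)‖ := by
    simpa using norm_sub_le (Complex.exp z - 1) (Complex.exp z - (1 + z))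
  nlinarith [norm_nonneg z]

lemma norm_boseReg_add_half_le_of_norm_le_one {z : ℂ} (hz₀ : z ≠ 0) (hz : ‖z‖ ≤ 1) :
    ‖boseReg z + 1 / 2‖ ≤ 4 * ‖z‖ := by
  have hpos : 0 < ‖z‖ := norm_pos_iff.mpr hz₀
  have hlow := norm_div_four_le_norm_exp_sub_one hz
  have hne : Complex.exp z - 1 ≠ 0 := norm_pos_iff.mp (by linarith)
  have htaylor := Complex.exp_bound hz (n := 3) (by norm_num)
  norm_num [Finset.sum_range_succ, Nat.factorial] at htaylor
  set r := Complex.exp z - (1 + z + z ^ 2 / 2) with hr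
  have hquot : boseReg z + 1 / 2 =
      (-r + z ^ 3 / 4 + z * r / 2) / (z * (Complex.exp z - 1)) := by
    rw [boseReg, bose, hr]
    field_simp
    ring
  have hnum : ‖-r + z ^ 3 / 4 + z * r / 2‖ ≤ ‖z‖ ^ 3 := by
    calc ‖-r + z ^ 3 / 4 + z * r / 2‖ ≤ ‖-r‖ + ‖z ^ 3 / 4‖ + ‖z * r / 2‖ := norm_add₃_le
      _ = ‖r‖ + ‖z‖ ^ 3 / 4 + ‖z‖ * ‖r‖ / 2 := by simp
      _ ≤ ‖z‖ ^ 3 := by nlinarith [norm_nonneg r, pow_pos hpos 3]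
  rw [hquot, norm_div, norm_mul, div_le_iff₀ (by positivity)]
  calc ‖-r + z ^ 3 / 4 + z * r / 2‖ ≤ 4 * ‖z‖ * (‖z‖ * (‖z‖ / 4)) := by linarith
    _ ≤ 4 * ‖z‖ * (‖z‖ * ‖Complex.exp z - 1‖) := by gcongr

lemma norm_boseReg_add_half_le {w : ℂ} (hw : 0 < w.re) :
    ‖boseReg w + 1 / 2‖ ≤ 4 * ‖w‖ + 2 * ‖w‖ ^ 3 / w.re := by
  have hne : w ≠ 0 := fun h ↦ by simp [h] at hw
  rcases le_total ‖w‖ 1 with h | h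
  · exact (norm_boseReg_add_half_le_of_norm_le_one hne h).trans
      (le_add_of_nonneg_right (by positivity))
  · have hinv : ‖w⁻¹‖ ≤ w.re⁻¹ := by
      rw [norm_inv]
      exact inv_anti₀ hw (Complex.re_le_norm w)
    have hcube : w.re⁻¹ ≤ ‖w‖ ^ 3 / w.re := by
      rw [← one_div]
      gcongr
      exact one_le_pow₀ h
    calc ‖boseReg w + 1 / 2‖ ≤ ‖bose w‖ + ‖w⁻¹‖ + ‖(1 / 2 : ℂ)‖ :=
          (norm_add_le _ _).trans (add_le_add_left (norm_sub_le _ _) _)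
      _ ≤ ‖w‖ ^ 3 / w.re + ‖w‖ ^ 3 / w.re + 1 / 2 := by
          gcongr
          · exact (norm_bose_le_inv_re hw).trans hcube
          · exact hinv.trans hcube
          · norm_num
      _ ≤ 4 * ‖w‖ + 2 * ‖w‖ ^ 3 / w.re := by
          rw [mul_div_assoc]
          linarith

lemma norm_boseReg_le_inv {t : ℝ} (ht : 0 < t) : ‖boseReg t‖ ≤ t⁻¹ := by
  have hexp : t ≤ exp t - 1 := by linarith [add_one_le_exp t]
  have hinv : (exp t - 1)⁻¹ ≤ t⁻¹ := inv_anti₀ ht hexp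
  have hpos : 0 < (exp t - 1)⁻¹ := inv_pos.mpr (ht.trans_le hexp)
  rw [boseReg_ofReal, Complex.norm_real, norm_eq_abs, abs_le]
  constructor <;> linarith

lemma norm_boseReg_le {t : ℝ} (ht : 0 < t) : ‖boseReg t‖ ≤ 9 / (1 + t) := by
  rw [le_div_iff₀ (by positivity)]
  rcases le_total t 1 with h | h
  · have hnear := norm_boseReg_add_half_le_of_norm_le_one (Complex.ofReal_ne_zero.mpr ht.ne')
      (by simpa [abs_of_pos ht] using h)
    have htriangle := norm_sub_le (boseReg t + 1 / 2) (1 / 2)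
    rw [add_sub_cancel_right] at htriangle
    norm_num [abs_of_pos ht] at hnear htriangle
    nlinarith [norm_nonneg (boseReg t)]
  · calc ‖boseReg t‖ * (1 + t) ≤ t⁻¹ * (t + t) := by
          gcongr
          exact norm_boseReg_le_inv ht
      _ ≤ 9 := by
          field_simp
          norm_num

lemma continuousOn_bose : ContinuousOn (fun t : ℝ ↦ bose t) (Ioi 0) :=
  ContinuousOn.inv₀ (by fun_prop) fun t ht ↦ exp_sub_one_ne_zero_of_re_pos (by simpa using ht)

lemma continuousOn_boseReg : ContinuousOn (fun t : ℝ ↦ boseReg t) (Ioi 0) :=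
  continuousOn_bose.sub (ContinuousOn.inv₀ (by fun_prop) fun t (ht : 0 < t) ↦
    Complex.ofReal_ne_zero.mpr ht.ne')

lemma differentiableAt_boseReg {w : ℂ} (hw : 0 < w.re) : DifferentiableAt ℂ boseReg w := by
  have hne : w ≠ 0 := fun h ↦ by simp [h] at hw
  have hbose : DifferentiableAt ℂ bose w :=
    DifferentiableAt.inv (by fun_prop) (exp_sub_one_ne_zero_of_re_pos hw)
  exact hbose.sub (differentiableAt_inv hne)

end Bose

section MellinBose

lemma isBigO_bose_atTop : (fun t : ℝ ↦ bose t) =O[atTop] fun t : ℝ ↦ exp (-(1 / 2) * t) := by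
  refine .of_bound 1 ?_
  filter_upwards [eventually_ge_atTop 1] with t ht
  simpa using norm_bose_le_exp ht

lemma isBigO_bose_zero :
    (fun t : ℝ ↦ bose t) =O[nhdsWithin 0 (Ioi 0)] fun t : ℝ ↦ t ^ (-(1 : ℝ)) := by
  refine .of_bound 1 ?_
  filter_upwards [self_mem_nhdsWithin] with t (ht : 0 < t)
  simpa [rpow_neg_one, abs_of_pos ht] using norm_bose_le_inv_re (w := t) (by simpa using ht)

lemma isBigO_boseReg_zero :
    (fun t : ℝ ↦ boseReg t) =O[nhdsWithin 0 (Ioi 0)] fun t : ℝ ↦ t ^ (-(0 : ℝ)) := by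
  refine .of_bound 9 ?_
  filter_upwards [self_mem_nhdsWithin] with t (ht : 0 < t)
  simpa using (norm_boseReg_le ht).trans (div_le_self (by norm_num) (by linarith))

lemma isBigO_boseReg_atTop :
    (fun t : ℝ ↦ boseReg t) =O[atTop] fun t : ℝ ↦ t ^ (-(1 : ℝ)) := by
  refine .of_bound 1 ?_
  filter_upwards [eventually_gt_atTop 0] with t ht
  simpa [rpow_neg_one, abs_of_pos ht] using norm_boseReg_le_inv ht

lemma hasSum_exp_neg_mul_bose {t : ℝ} (ht : 0 < t) :
    HasSum (fun n : ℕ ↦ (1 : ℂ) * exp (-(n + 1 : ℝ) * t)) (bose t) := by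
  have hlt : exp (-t) < 1 := exp_lt_one_iff.mpr (neg_lt_zero.mpr ht)
  have hgeom := (hasSum_geometric_of_lt_one (exp_pos (-t)).le hlt).mul_left (exp (-t))
  have hvalue : exp (-t) * (1 - exp (-t))⁻¹ = (exp t - 1)⁻¹ := by
    have hne : exp t - 1 ≠ 0 := (by linarith [add_one_lt_exp ht.ne'] : 0 < exp t - 1).ne'
    rw [exp_neg]
    field_simp
  rw [bose_ofReal, ← hvalue]
  convert Complex.hasSum_ofReal.mpr hgeom using 2 with n
  rw [one_mul, ← exp_nat_mul, ← exp_add]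
  ring_nf

lemma hasMellin_bose {s : ℂ} (hs : 1 < s.re) :
    HasMellin (fun t : ℝ ↦ bose t) s (Complex.Gamma s * riemannZeta s) := by
  refine ⟨mellinConvergent_of_isBigO_rpow_exp one_half_pos
    (continuousOn_bose.locallyIntegrableOn measurableSet_Ioi) isBigO_bose_atTop isBigO_bose_zero hs,
    ?_⟩
  have hsummable : Summable fun n : ℕ ↦ ‖(1 : ℂ)‖ / ((n : ℝ) + 1) ^ s.re := by
    simpa using (summable_nat_add_iff 1).mpr (summable_one_div_nat_rpow.mpr hs)
  have hsum := hasSum_mellin (p := fun n : ℕ ↦ (n : ℝ) + 1) (fun n ↦ .inr (by positivity))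
    (by linarith) (fun t ht ↦ hasSum_exp_neg_mul_bose ht) hsummable
  rw [← hsum.tsum_eq, zeta_eq_tsum_one_div_nat_add_one_cpow hs, ← tsum_mul_left]
  exact tsum_congr fun n ↦ by push_cast; ring

lemma mellinConvergent_boseReg {s : ℂ} (hs₀ : 0 < s.re) (hs₁ : s.re < 1) :
    MellinConvergent (fun t : ℝ ↦ boseReg t) s :=
  mellinConvergent_of_isBigO_rpow (continuousOn_boseReg.locallyIntegrableOn measurableSet_Ioi)
    isBigO_boseReg_atTop hs₁ isBigO_boseReg_zero hs₀

/-- The function `bose` with `1 / t` subtracted on `(0, 1]` only. Its Mellin transform converges on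
`0 < re s`, so it mediates between those of `bose` (on `1 < re s`) and `boseReg`
(on `0 < re s < 1`). -/
noncomputable def boseTrunc (t : ℝ) : ℂ :=
  bose t - indicator (Ioc 0 1) (fun t : ℝ ↦ (t : ℂ) ^ (-1 : ℂ)) t

lemma boseTrunc_of_mem {t : ℝ} (ht : t ∈ Ioc (0 : ℝ) 1) : boseTrunc t = boseReg t := by
  simp [boseTrunc, boseReg, ht, Complex.cpow_neg_one]

lemma boseTrunc_of_one_lt {t : ℝ} (ht : 1 < t) : boseTrunc t = bose t := by
  simp [boseTrunc, ht.not_ge]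

lemma locallyIntegrableOn_boseTrunc : LocallyIntegrableOn boseTrunc (Ioi 0) := by
  have hinv : ContinuousOn (fun t : ℝ ↦ (t : ℂ) ^ (-1 : ℂ)) (Ioi 0) := fun t (ht : 0 < t) ↦
    (Complex.continuousAt_ofReal_cpow_const t (-1) (.inr ht.ne')).continuousWithinAt
  refine (continuousOn_bose.locallyIntegrableOn measurableSet_Ioi).sub fun x hx ↦ ?_
  obtain ⟨U, hU, hint⟩ := hinv.locallyIntegrableOn (μ := volume) measurableSet_Ioi x hx
  exact ⟨U, hU, hint.indicator measurableSet_Ioc⟩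

lemma isBigO_boseTrunc_atTop : boseTrunc =O[atTop] fun t : ℝ ↦ exp (-(1 / 2) * t) := by
  refine isBigO_bose_atTop.congr' ?_ .rfl
  filter_upwards [eventually_gt_atTop 1] with t ht using (boseTrunc_of_one_lt ht).symm

lemma isBigO_boseTrunc_zero :
    boseTrunc =O[nhdsWithin 0 (Ioi 0)] fun t : ℝ ↦ t ^ (-(0 : ℝ)) := by
  refine isBigO_boseReg_zero.congr' ?_ .rfl
  filter_upwards [Ioc_mem_nhdsGT one_pos] with t ht using (boseTrunc_of_mem ht).symm

lemma mellinConvergent_boseTrunc {s : ℂ} (hs : 0 < s.re) : MellinConvergent boseTrunc s :=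
  mellinConvergent_of_isBigO_rpow_exp one_half_pos locallyIntegrableOn_boseTrunc
    isBigO_boseTrunc_atTop isBigO_boseTrunc_zero hs

lemma differentiableOn_mellin_boseTrunc :
    DifferentiableOn ℂ (mellin boseTrunc) {s | 0 < s.re} := fun _ hs ↦
  (mellin_differentiableAt_of_isBigO_rpow_exp one_half_pos locallyIntegrableOn_boseTrunc
    isBigO_boseTrunc_atTop isBigO_boseTrunc_zero hs).differentiableWithinAt

lemma differentiableOn_Gamma : DifferentiableOn ℂ Complex.Gamma {s | 0 < s.re} := by
  refine fun s (hs : 0 < s.re) ↦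
    (Complex.differentiableAt_Gamma s fun m h ↦ ?_).differentiableWithinAt
  simp only [h, Complex.neg_re, Complex.natCast_re, neg_pos] at hs
  exact hs.not_ge m.cast_nonneg

lemma riemannZeta₁_eq_sub_one_mul {s : ℂ} (hs : s ≠ 1) :
    riemannZeta₁ s = (s - 1) * riemannZeta s := by
  rw [riemannZeta_eq_inv_sub_mul hs, mul_inv_cancel_left₀ (sub_ne_zero.mpr hs)]

lemma sub_one_mul_mellin_boseTrunc {s : ℂ} (hs : 0 < s.re) :
    (s - 1) * mellin boseTrunc s = Complex.Gamma s * riemannZeta₁ s - 1 := by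
  refine eqOn_re_gt_of_eqOn_re_gt (b := 1) (f := fun s ↦ (s - 1) * mellin boseTrunc s)
    (g := fun s ↦ Complex.Gamma s * riemannZeta₁ s - 1)
    (DifferentiableOn.mul (by fun_prop) differentiableOn_mellin_boseTrunc)
    ((differentiableOn_Gamma.mul differentiable_riemannZeta₁.differentiableOn).sub_const 1)
    (fun s (hs : 1 < s.re) ↦ ?_) hs
  have hs₁ : s ≠ 1 := fun h ↦ by simp [h] at hs
  have hs₁' : s + -1 ≠ 0 := sub_ne_zero.mpr hs₁
  have hpow := hasMellin_cpow_Ioc (-1) (s := s) (by simpa using by linarith)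
  have hdiff := (hasMellin_sub (hasMellin_bose hs).1 hpow.1).2
  rw [(hasMellin_bose hs).2, hpow.2] at hdiff
  change mellin boseTrunc s = _ at hdiff
  simp only [hdiff, riemannZeta₁_eq_sub_one_mul hs₁, sub_eq_add_neg s 1]
  field_simp

lemma mellin_boseReg_sub_boseTrunc {s : ℂ} (hs : s.re < 1) :
    mellin (fun t : ℝ ↦ boseReg t - boseTrunc t) s = 1 / (s - 1) := by
  have hdiff : EqOn (fun t : ℝ ↦ (t : ℂ) ^ (s - 1) • (boseReg t - boseTrunc t))
      (fun t : ℝ ↦ (t : ℂ) ^ (s - 1) • indicator (Ioi 1) (fun t : ℝ ↦ -(t : ℂ)⁻¹) t) (Ioi 0) := by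
    intro t ht
    rcases le_or_gt t 1 with h | h
    · simp [boseTrunc_of_mem ⟨ht, h⟩, h.not_gt]
    · simp [boseTrunc_of_one_lt h, boseReg, h]
  have hpow : EqOn (fun t : ℝ ↦ (t : ℂ) ^ (s - 1) • -(t : ℂ)⁻¹)
      (fun t : ℝ ↦ -(t : ℂ) ^ (s - 2)) (Ioi 1) := by
    intro t (ht : 1 < t)
    have ht₀ : (t : ℂ) ≠ 0 := Complex.ofReal_ne_zero.mpr (by linarith)
    simp only [smul_eq_mul, mul_neg]
    rw [← Complex.cpow_neg_one, ← Complex.cpow_add _ _ ht₀]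
    ring_nf
  rw [mellin, setIntegral_congr_fun measurableSet_Ioi hdiff]
  change mellin _ s = _
  rw [mellin_indicator_Ioi _ _ zero_le_one, setIntegral_congr_fun measurableSet_Ioi hpow,
    integral_neg, integral_Ioi_cpow_of_lt (by simpa using by linarith) one_pos,
    Complex.ofReal_one, Complex.one_cpow, neg_div, neg_neg]
  ring_nf

lemma hasMellin_boseReg {s : ℂ} (hs₀ : 0 < s.re) (hs₁ : s.re < 1) :
    HasMellin (fun t : ℝ ↦ boseReg t) s (Complex.Gamma s * riemannZeta s) := by
  refine ⟨mellinConvergent_boseReg hs₀ hs₁, ?_⟩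
  have hs : s ≠ 1 := fun h ↦ by simp [h] at hs₁
  have hs' : s - 1 ≠ 0 := sub_ne_zero.mpr hs
  have htrunc := sub_one_mul_mellin_boseTrunc hs₀
  have hsub := (hasMellin_sub (mellinConvergent_boseReg hs₀ hs₁)
    (mellinConvergent_boseTrunc hs₀)).2
  rw [mellin_boseReg_sub_boseTrunc hs₁] at hsub
  rw [riemannZeta₁_eq_sub_one_mul hs] at htrunc
  rw [eq_add_of_sub_eq hsub.symm]
  field_simp
  linear_combination htrunc

end MellinBose

section CriticalLine

/-- The fractional part of `t`, cut off to `t > 1`; its Mellin transform gives the continuation of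
`ζ` to `0 < re s` by partial summation. -/
noncomputable def fractTail : ℝ → ℂ := indicator (Ioi 1) fun t : ℝ ↦ ((Int.fract t : ℝ) : ℂ)

lemma norm_fractTail_le_one (t : ℝ) : ‖fractTail t‖ ≤ 1 := by
  refine (norm_indicator_le_norm_self _ _).trans ?_
  simpa [abs_of_nonneg (Int.fract_nonneg t)] using (Int.fract_lt_one t).le

@[fun_prop]
lemma measurable_fractTail : Measurable fractTail :=
  Measurable.indicator (Complex.measurable_ofReal.comp measurable_fract) measurableSet_Ioi

lemma differentiableAt_mellin_fractTail {s : ℂ} (hs : s.re < 0) :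
    DifferentiableAt ℂ (mellin fractTail) s := by
  refine mellin_differentiableAt_of_isBigO_rpow (a := 0) (b := s.re - 1) ?_ ?_ hs ?_ (by simp)
  · refine LocallyIntegrable.locallyIntegrableOn ?_ _
    exact (locallyIntegrable_const (1 : ℝ)).mono measurable_fractTail.aestronglyMeasurable
      (.of_forall fun t ↦ by simpa using norm_fractTail_le_one t)
  · exact .of_bound 1 (.of_forall fun t ↦ by simpa using norm_fractTail_le_one t)
  · refine .of_bound 1 ?_
    filter_upwards [Ioc_mem_nhdsGT one_pos] with t ht
    simp [fractTail, ht.2]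

lemma integrableOn_cpow_mul_fract {s : ℂ} (hs : 0 < s.re) :
    IntegrableOn (fun t : ℝ ↦ (t : ℂ) ^ (-s - 1) * (Int.fract t : ℝ)) (Ioi 1) := by
  have hpow : IntegrableOn (fun t : ℝ ↦ (t : ℂ) ^ (-s - 1)) (Ioi 1) :=
    integrableOn_Ioi_cpow_of_lt (by simpa using by linarith) one_pos
  refine Integrable.mono hpow (hpow.aestronglyMeasurable.mul
    (Complex.measurable_ofReal.comp measurable_fract).aestronglyMeasurable)
    (.of_forall fun t ↦ ?_)
  rw [norm_mul, Complex.norm_real, norm_of_nonneg (Int.fract_nonneg t)]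
  exact mul_le_of_le_one_right (norm_nonneg _) (Int.fract_lt_one t).le

lemma mellin_fractTail (s : ℂ) :
    mellin fractTail (-s) = ∫ t in Ioi (1 : ℝ), (t : ℂ) ^ (-s - 1) * (Int.fract t : ℝ) :=
  mellin_indicator_Ioi _ _ zero_le_one

lemma integral_floor_mul_cpow {s : ℂ} (hs : 1 < s.re) :
    ∫ t in Ioi (1 : ℝ), (⌊t⌋₊ : ℂ) * (t : ℂ) ^ (-(s + 1)) =
      1 / (s - 1) - mellin fractTail (-s) := by
  have hpow : 1 / (s - 1) = ∫ t in Ioi (1 : ℝ), (t : ℂ) ^ (-s) := by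
    rw [integral_Ioi_cpow_of_lt (by simpa using hs) one_pos, Complex.ofReal_one, Complex.one_cpow,
      ← neg_sub 1 s, neg_add_eq_sub, div_neg, neg_div]
  rw [mellin_fractTail, hpow, ← integral_sub
    (integrableOn_Ioi_cpow_of_lt (by simpa using hs) one_pos)
    (integrableOn_cpow_mul_fract (zero_lt_one.trans hs))]
  refine setIntegral_congr_fun measurableSet_Ioi fun t (ht : 1 < t) ↦ ?_
  have ht₀ : (t : ℂ) ≠ 0 := Complex.ofReal_ne_zero.mpr (by linarith)
  have hfloor : ((⌊t⌋₊ : ℕ) : ℂ) = t - (Int.fract t : ℝ) := by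
    rw [← Complex.ofReal_natCast, natCast_floor_eq_intCast_floor (by linarith),
      ← Int.self_sub_fract, Complex.ofReal_sub]
  have hsucc : (t : ℂ) ^ (-s) = (t : ℂ) ^ (-s - 1) * t := by
    rw [Complex.cpow_sub _ _ ht₀, Complex.cpow_one, div_mul_cancel₀ _ ht₀]
  simp only [hfloor, hsucc, neg_add']
  ring

lemma riemannZeta_eq_mul_sub_mellin_fractTail {s : ℂ} (hs : 1 < s.re) :
    riemannZeta s = s * (1 / (s - 1) - mellin fractTail (-s)) := by
  have habel := LSeries_eq_mul_integral' (1 : ℕ → ℂ) (r := 1) zero_le_one hs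
    (.of_bound 1 (.of_forall fun n ↦ by simp))
  rw [← LSeries_one_eq_riemannZeta hs, habel, ← integral_floor_mul_cpow hs]
  simp

lemma riemannZeta₁_eq_sub_mul_mellin_fractTail {s : ℂ} (hs : 0 < s.re) :
    riemannZeta₁ s = s - s * (s - 1) * mellin fractTail (-s) := by
  have hmellin : DifferentiableOn ℂ (fun s ↦ mellin fractTail (-s)) {s | 0 < s.re} := by
    intro s (hs : 0 < s.re)
    have hneg : DifferentiableAt ℂ (mellin fractTail) (-s) :=
      differentiableAt_mellin_fractTail (by simpa using hs)
    exact (hneg.comp s (f := fun s ↦ -s) (by fun_prop)).differentiableWithinAt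
  have hright : DifferentiableOn ℂ (fun s ↦ s - s * (s - 1) * mellin fractTail (-s))
      {s | 0 < s.re} :=
    DifferentiableOn.sub (by fun_prop) (DifferentiableOn.mul (by fun_prop) hmellin)
  refine eqOn_re_gt_of_eqOn_re_gt (b := 1) differentiable_riemannZeta₁.differentiableOn hright
    (fun s (hs : 1 < s.re) ↦ ?_) hs
  have hs₁ : s ≠ 1 := fun h ↦ by simp [h] at hs
  have hs₁' := sub_ne_zero.mpr hs₁
  rw [riemannZeta₁_eq_sub_one_mul hs₁, riemannZeta_eq_mul_sub_mellin_fractTail hs]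
  field_simp

lemma norm_mellin_fractTail_le {s : ℂ} (hs : 0 < s.re) : ‖mellin fractTail (-s)‖ ≤ 1 / s.re := by
  have hpow : ∫ t in Ioi (1 : ℝ), t ^ (-s.re - 1) = 1 / s.re := by
    rw [integral_Ioi_rpow_of_lt (by linarith) one_pos, sub_add_cancel, one_rpow, neg_div_neg_eq]
  rw [mellin_fractTail, ← hpow]
  refine norm_integral_le_of_norm_le (integrableOn_Ioi_rpow_of_lt (by linarith) one_pos) ?_
  filter_upwards [ae_restrict_mem measurableSet_Ioi] with t (ht : 1 < t)
  rw [norm_mul, Complex.norm_cpow_eq_rpow_re_of_pos (by linarith), Complex.norm_real,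
    norm_of_nonneg (Int.fract_nonneg t), Complex.sub_re, Complex.neg_re, Complex.one_re]
  exact mul_le_of_le_one_right (by positivity) (Int.fract_lt_one t).le

lemma norm_riemannZeta_le {s : ℂ} (hs₀ : 0 < s.re) (hs₁ : s ≠ 1) :
    ‖riemannZeta s‖ ≤ ‖s / (s - 1)‖ + ‖s‖ / s.re := by
  have hs₁' := sub_ne_zero.mpr hs₁
  have hzeta : riemannZeta s = s / (s - 1) - s * mellin fractTail (-s) := by
    have hentire := riemannZeta₁_eq_sub_mul_mellin_fractTail hs₀
    rw [riemannZeta₁_eq_sub_one_mul hs₁] at hentire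
    field_simp
    linear_combination hentire
  rw [hzeta, div_eq_mul_one_div ‖s‖]
  refine (norm_sub_le _ _).trans ?_
  rw [norm_mul s]
  gcongr
  exact norm_mellin_fractTail_le hs₀

lemma half_add_mul_I_ne_one (t : ℝ) : (1 / 2 + t * Complex.I : ℂ) ≠ 1 := fun h ↦ by
  norm_num [Complex.ext_iff] at h

lemma conj_half_add_mul_I (t : ℝ) :
    (starRingEnd ℂ) (1 / 2 + t * Complex.I : ℂ) = 1 - (1 / 2 + t * Complex.I) := by
  apply Complex.ext <;> norm_num

lemma norm_riemannZeta_half_add_mul_I_le (t : ℝ) :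
    ‖riemannZeta (1 / 2 + t * Complex.I)‖ ≤ 2 + 2 * |t| := by
  have hre : (1 / 2 + t * Complex.I : ℂ).re = 1 / 2 := by simp
  have hquot : ‖(1 / 2 + t * Complex.I : ℂ) / (1 / 2 + t * Complex.I - 1)‖ = 1 := by
    rw [← neg_sub 1, ← conj_half_add_mul_I, norm_div, norm_neg, Complex.norm_conj, div_self]
    exact norm_ne_zero_iff.mpr fun h ↦ by norm_num [h] at hre
  have hnorm : ‖(1 / 2 + t * Complex.I : ℂ)‖ ≤ 1 / 2 + |t| := by
    simpa using norm_add_le (1 / 2 : ℂ) (t * Complex.I)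
  have hzeta := norm_riemannZeta_le (by rw [hre]; norm_num) (half_add_mul_I_ne_one t)
  rw [hquot, hre] at hzeta
  linarith

lemma Z2_nonneg (t : ℝ) : 0 ≤ Z2 t := sq_nonneg _

lemma Z2_le (t : ℝ) : Z2 t ≤ 4 * (1 + |t|) ^ 2 := by
  calc Z2 t ≤ (2 + 2 * |t|) ^ 2 := by
        unfold Z2
        gcongr
        exact norm_riemannZeta_half_add_mul_I_le t
    _ = 4 * (1 + |t|) ^ 2 := by ring

lemma continuous_Z2 : Continuous Z2 := by
  refine (continuous_iff_continuousAt.mpr fun t ↦ ?_).norm.pow 2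
  exact (differentiableAt_riemannZeta (half_add_mul_I_ne_one t)).continuousAt.comp
    (f := fun t : ℝ ↦ (1 / 2 + t * Complex.I : ℂ)) (by fun_prop)

lemma Z2_neg (t : ℝ) : Z2 (-t) = Z2 t := by
  have hconj : (1 / 2 + ((-t : ℝ) : ℂ) * Complex.I) =
      (starRingEnd ℂ) (1 / 2 + t * Complex.I) := by
    apply Complex.ext <;> norm_num
  rw [Z2, hconj, riemannZeta_conj, Complex.norm_conj, Z2]

lemma riemannZeta_mul_riemannZeta_one_sub_half (t : ℝ) :
    riemannZeta (1 / 2 + t * Complex.I) * riemannZeta (1 - (1 / 2 + t * Complex.I)) = Z2 t := by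
  rw [← conj_half_add_mul_I, riemannZeta_conj, Complex.mul_conj, Complex.normSq_eq_norm_sq, Z2]

lemma exp_mul_abs_le_two_mul_cosh (t : ℝ) : exp (π * |t|) ≤ 2 * cosh (π * t) := by
  rw [← cosh_abs, abs_mul, abs_of_pos pi_pos, cosh_eq]
  linarith [exp_pos (-(π * |t|))]

/-- The weight `|Γ(1/2 + it) ζ(1/2 + it)|² / (2π)`, with the `Γ` factor evaluated by the reflection
formula. -/
noncomputable def zetaWeight (t : ℝ) : ℝ := Z2 t / (2 * cosh (π * t))

lemma zetaWeight_nonneg (t : ℝ) : 0 ≤ zetaWeight t := by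
  have := cosh_pos (π * t)
  exact div_nonneg (Z2_nonneg t) (by positivity)

lemma zetaWeight_le (t : ℝ) : zetaWeight t ≤ 4 * ((1 + |t|) ^ 2 * exp (-π * |t|)) := by
  have _hcosh := cosh_pos (π * t)
  have hcancel : exp (-π * |t|) * exp (π * |t|) = 1 := by simp [← exp_add]
  rw [zetaWeight, div_le_iff₀ (by positivity)]
  calc Z2 t ≤ 4 * (1 + |t|) ^ 2 := Z2_le t
    _ = 4 * ((1 + |t|) ^ 2 * exp (-π * |t|)) * exp (π * |t|) := by
        linear_combination (-4 * (1 + |t|) ^ 2) * hcancel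
    _ ≤ 4 * ((1 + |t|) ^ 2 * exp (-π * |t|)) * (2 * cosh (π * t)) := by
        gcongr
        exact exp_mul_abs_le_two_mul_cosh t

lemma continuous_zetaWeight : Continuous zetaWeight :=
  continuous_Z2.div (by fun_prop) fun t ↦ (mul_pos two_pos (cosh_pos _)).ne'

lemma integrable_zetaWeight : Integrable zetaWeight := by
  refine ((integrable_one_add_abs_pow_mul_exp 2 pi_pos).const_mul 4).mono'
    continuous_zetaWeight.aestronglyMeasurable (.of_forall fun t ↦ ?_)
  rw [norm_of_nonneg (zetaWeight_nonneg t)]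
  exact zetaWeight_le t

end CriticalLine

section Correlation

/-- The multiplicative correlation of `boseReg` with itself. -/
noncomputable def boseCorr : ℝ → ℂ := mulCorr (fun t : ℝ ↦ boseReg t) fun t : ℝ ↦ boseReg t

lemma norm_boseReg_mul_boseReg_le {a x v : ℝ} (ha : 0 < a) (ha₁ : a ≤ 1) (hx : a ≤ x)
    (hv : 0 < v) : ‖boseReg v * boseReg ((x * v : ℝ) : ℂ)‖ ≤ 81 / a * (1 + v ^ 2)⁻¹ := by
  have hx₀ : 0 < x := ha.trans_le hx
  have hscale : a * v ≤ x * v := by gcongr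
  calc ‖boseReg v * boseReg ((x * v : ℝ) : ℂ)‖ ≤ 9 / (1 + v) * (9 / (1 + x * v)) := by
        rw [norm_mul]
        gcongr
        · exact norm_boseReg_le hv
        · exact norm_boseReg_le (mul_pos hx₀ hv)
    _ = 81 / ((1 + v) * (1 + x * v)) := by
        field_simp
        norm_num
    _ ≤ 81 / (a * (1 + v ^ 2)) := by
        gcongr 81 / ?_
        nlinarith [mul_le_mul_of_nonneg_left (by nlinarith : a * (1 + v) ≤ 1 + x * v)
          (by positivity : 0 ≤ 1 + v), mul_pos ha hv]
    _ = 81 / a * (1 + v ^ 2)⁻¹ := by field_simp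

lemma continuousAt_boseCorr {x : ℝ} (hx : 0 < x) : ContinuousAt boseCorr x := by
  have ha : 0 < min (x / 2) 1 := lt_min (half_pos hx) one_pos
  refine continuousAt_of_dominated (bound := fun v ↦ 81 / min (x / 2) 1 * (1 + v ^ 2)⁻¹) ?_ ?_
    (integrable_inv_one_add_sq.const_mul _).integrableOn ?_
  · exact .of_forall fun y ↦ Measurable.aestronglyMeasurable (by fun_prop)
  · filter_upwards [lt_mem_nhds (half_lt_self hx)] with y hy
    filter_upwards [ae_restrict_mem measurableSet_Ioi] with v hv
    exact norm_boseReg_mul_boseReg_le ha (min_le_right _ _) ((min_le_left _ _).trans hy.le) hv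
  · filter_upwards [ae_restrict_mem measurableSet_Ioi] with v (hv : 0 < v)
    have hcont := continuousOn_boseReg.continuousAt (Ioi_mem_nhds (mul_pos hx hv))
    exact continuousAt_const.mul (hcont.comp (f := fun y : ℝ ↦ y * v) (by fun_prop))

lemma mellinConvergent_boseCorr {s : ℂ} (hs₀ : 0 < s.re) (hs₁ : s.re < 1) :
    MellinConvergent boseCorr s :=
  mellinConvergent_mulCorr (by fun_prop) (by fun_prop)
    (mellinConvergent_boseReg (by simpa using hs₁) (by simpa using hs₀))
    (mellinConvergent_boseReg hs₀ hs₁)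

lemma mellin_boseCorr_half (t : ℝ) :
    mellin boseCorr (1 / 2 + t * Complex.I) = ((2 * π * zetaWeight t : ℝ) : ℂ) := by
  set s : ℂ := 1 / 2 + t * Complex.I with hs
  have hre : s.re = 1 / 2 := by simp [hs]
  have hphi := hasMellin_boseReg (s := s) (by norm_num [hre]) (by norm_num [hre])
  have hphi' := hasMellin_boseReg (s := 1 - s) (by norm_num [hre]) (by norm_num [hre])
  have hsin : Complex.sin (π * s) = (cosh (π * t) : ℂ) := by
    rw [hs, show (π : ℂ) * (1 / 2 + t * Complex.I) = π / 2 - -(π * t) * Complex.I by ring,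
      Complex.sin_pi_div_two_sub, Complex.cos_mul_I, Complex.cosh_neg]
    push_cast
    rfl
  have hcosh : (cosh (π * t) : ℂ) ≠ 0 := Complex.ofReal_ne_zero.mpr (cosh_pos _).ne'
  calc mellin boseCorr s = (Complex.Gamma (1 - s) * riemannZeta (1 - s)) *
        (Complex.Gamma s * riemannZeta s) := by
        rw [boseCorr, mellin_mulCorr (by fun_prop) (by fun_prop) hphi'.1 hphi.1, hphi.2, hphi'.2]
    _ = (Complex.Gamma s * Complex.Gamma (1 - s)) * (riemannZeta s * riemannZeta (1 - s)) := by ring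
    _ = π / cosh (π * t) * Z2 t := by
        rw [Complex.Gamma_mul_Gamma_one_sub, hsin, riemannZeta_mul_riemannZeta_one_sub_half]
    _ = ((2 * π * zetaWeight t : ℝ) : ℂ) := by
        rw [zetaWeight]
        push_cast at hcosh ⊢
        field_simp

lemma boseCorr_eq_integral_zetaWeight {x : ℝ} (hx : 0 < x) :
    boseCorr x = ∫ t : ℝ, (x : ℂ) ^ (-(1 / 2 + t * Complex.I)) * zetaWeight t := by
  have hmellin (t : ℝ) : mellin boseCorr (((1 / 2 : ℝ) : ℂ) + t * Complex.I) =
      ((2 * π * zetaWeight t : ℝ) : ℂ) := by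
    simpa using mellin_boseCorr_half t
  have hvert : Complex.VerticalIntegrable (mellin boseCorr) (1 / 2 : ℝ) :=
    (integrable_zetaWeight.const_mul (2 * π)).ofReal.congr (.of_forall fun t ↦ (hmellin t).symm)
  rw [← mellinInv_mellin_eq (1 / 2) boseCorr hx
    (mellinConvergent_boseCorr (by norm_num) (by norm_num)) hvert (continuousAt_boseCorr hx),
    mellinInv, Complex.real_smul, ← integral_const_mul]
  congr 1 with t
  rw [hmellin, smul_eq_mul]
  push_cast
  field_simp

end Correlation

section Constants

lemma hasMellin_exp_neg {s : ℂ} (hs : 0 < s.re) :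
    HasMellin (fun t : ℝ ↦ (exp (-t) : ℂ)) s (Complex.Gamma s) := by
  refine ⟨(Complex.GammaIntegral_convergent hs).congr (.of_forall fun t ↦ mul_comm _ _), ?_⟩
  rw [Complex.Gamma_eq_integral hs, Complex.GammaIntegral_eq_mellin]

lemma hasMellin_div_ofReal {f : ℝ → ℂ} {s a : ℂ} (hf : HasMellin f (s - 1) a) :
    HasMellin (fun t : ℝ ↦ f t / t) s a := by
  have hdiv : (fun t : ℝ ↦ f t / t) = fun t : ℝ ↦ (t : ℂ) ^ (-1 : ℂ) • f t := by
    ext t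
    rw [Complex.cpow_neg_one, smul_eq_mul, div_eq_inv_mul]
  rw [hdiv]
  exact ⟨MellinConvergent.cpow_smul.mpr hf.1, (mellin_cpow_smul f s (-1)).trans hf.2⟩

lemma tendsto_ofReal_nhdsGT (a : ℝ) :
    Tendsto (fun x : ℝ ↦ (x : ℂ)) (nhdsWithin a (Ioi a)) (nhdsWithin a {(a : ℂ)}ᶜ) := by
  refine tendsto_nhdsWithin_iff.mpr
    ⟨(Complex.continuous_ofReal.tendsto a).mono_left nhdsWithin_le_nhds, ?_⟩
  filter_upwards [self_mem_nhdsWithin] with x (hx : a < x)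
  exact Complex.ofReal_injective.ne hx.ne'

lemma hasIntegralIoi_of_tendsto_mellin {f : ℝ → ℂ} {a : ℂ} {b : ℝ} (hf : IntegrableOn f (Ioi 0))
    (hb : 1 < b) (hfb : MellinConvergent f b)
    (hlim : Tendsto (fun x : ℝ ↦ mellin f x) (nhdsWithin 1 (Ioi 1)) (nhds a)) :
    HasIntegralIoi f a := by
  have hone : MellinConvergent f (1 : ℝ) := by simpa using mellinConvergent_one hf
  have hcont := (continuousOn_mellin_Icc hone hfb) 1 (left_mem_Icc.mpr hb.le)
  have hmono := hcont.tendsto.mono_left (nhdsWithin_mono 1 Ioo_subset_Icc_self)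
  rw [nhdsWithin_Ioo_eq_nhdsGT hb, Complex.ofReal_one, mellin_one] at hmono
  exact ⟨hf, tendsto_nhds_unique hmono hlim⟩

lemma tendsto_Gamma_nhdsGT_one :
    Tendsto (fun x : ℝ ↦ Complex.Gamma x) (nhdsWithin 1 (Ioi 1)) (nhds 1) := by
  have hcont := Complex.differentiableAt_Gamma_one.continuousAt.tendsto
  rw [Complex.Gamma_one] at hcont
  exact hcont.comp (by simpa using (tendsto_ofReal_nhdsGT 1).mono_right nhdsWithin_le_nhds)

/-- `B z - e ^ (-z) / z`, whose integral over the positive half-line is Euler's constant. -/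
noncomputable def eulerKernel (z : ℝ) : ℂ := bose z - exp (-z) / z

lemma norm_eulerKernel_le {z : ℝ} (hz : 0 < z) : ‖eulerKernel z‖ ≤ 10 * exp (-1 * z) := by
  have hfactor : eulerKernel z = exp (-z) * (1 + boseReg z) := by
    have hne : exp z - 1 ≠ 0 := (by linarith [add_one_lt_exp hz.ne'] : 0 < exp z - 1).ne'
    rw [eulerKernel, bose_ofReal, boseReg_ofReal, exp_neg]
    norm_cast
    field_simp
    ring
  have hnine : 9 / (1 + z) ≤ 9 := div_le_self (by norm_num) (by linarith)
  have hnorm : ‖1 + boseReg z‖ ≤ 10 := by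
    have htriangle := norm_add_le 1 (boseReg z)
    rw [norm_one] at htriangle
    linarith [norm_boseReg_le hz]
  rw [hfactor, norm_mul, Complex.norm_real, norm_of_nonneg (exp_pos _).le, mul_comm, neg_one_mul]
  gcongr

lemma integrableOn_eulerKernel : IntegrableOn eulerKernel (Ioi 0) := by
  refine ((integrableOn_exp_mul_Ioi (a := -1) (by norm_num) 0).const_mul 10).mono'
    (Measurable.aestronglyMeasurable (by unfold eulerKernel; fun_prop)) ?_
  filter_upwards [ae_restrict_mem measurableSet_Ioi] with z hz using norm_eulerKernel_le hz

lemma hasMellin_eulerKernel {s : ℂ} (hs : 1 < s.re) :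
    HasMellin eulerKernel s
      (Complex.Gamma s * riemannZeta s - Complex.Gamma (s - 1)) := by
  have hbose := hasMellin_bose hs
  have hexp := hasMellin_div_ofReal (hasMellin_exp_neg (s := s - 1) (by simpa using hs))
  rw [← hbose.2, ← hexp.2]
  exact hasMellin_sub hbose.1 hexp.1

lemma hasIntegralIoi_eulerKernel : HasIntegralIoi eulerKernel eulerMascheroniConstant := by
  refine hasIntegralIoi_of_tendsto_mellin (b := 2) integrableOn_eulerKernel one_lt_two
    (hasMellin_eulerKernel (by norm_num)).1 ?_
  have hlim := tendsto_Gamma_nhdsGT_one.mul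
    (tendsto_riemannZeta_sub_one_div.comp (by simpa using tendsto_ofReal_nhdsGT 1))
  rw [one_mul] at hlim
  refine hlim.congr' ?_
  filter_upwards [self_mem_nhdsWithin] with x (hx : 1 < x)
  have hne : (x : ℂ) - 1 ≠ 0 := sub_ne_zero.mpr (by exact_mod_cast hx.ne')
  have hGamma := Complex.Gamma_add_one _ hne
  rw [sub_add_cancel] at hGamma
  simp only [(hasMellin_eulerKernel (s := x) (by simpa using hx)).2, hGamma, Function.comp_apply]
  field_simp

/-- `(φ z + e ^ (-z) / 2) / z`, whose integral over the positive half-line is `-log (2π) / 2`, as in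
Binet's formula. -/
noncomputable def stirlingKernel (z : ℝ) : ℂ := (boseReg z + 1 / 2 * exp (-z)) / z

lemma norm_boseReg_add_half_mul_exp_le {z : ℝ} (hz : 0 < z) (hz₁ : z ≤ 1) :
    ‖boseReg z + 1 / 2 * (exp (-z) : ℂ)‖ ≤ 5 * z := by
  have hnorm : ‖(z : ℂ)‖ = z := by simp [abs_of_pos hz]
  have hnear := norm_boseReg_add_half_le_of_norm_le_one (Complex.ofReal_ne_zero.mpr hz.ne')
    (hnorm.trans_le hz₁)
  have hexp : ‖(1 / 2 * (1 - exp (-z)) : ℂ)‖ ≤ z := by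
    have hle : exp (-z) ≤ 1 := exp_le_one_iff.mpr (by linarith)
    rw [show (1 / 2 * (1 - exp (-z)) : ℂ) = ((1 / 2 * (1 - exp (-z)) : ℝ) : ℂ) by push_cast; rfl,
      Complex.norm_real, norm_of_nonneg (by linarith)]
    linarith [add_one_le_exp (-z)]
  calc ‖boseReg z + 1 / 2 * (exp (-z) : ℂ)‖
      = ‖boseReg z + 1 / 2 - 1 / 2 * (1 - exp (-z))‖ := by ring_nf
    _ ≤ 4 * ‖(z : ℂ)‖ + z := (norm_sub_le _ _).trans (add_le_add hnear hexp)
    _ = 5 * z := by rw [hnorm]; ring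

lemma norm_boseReg_add_half_mul_exp_le_inv {z : ℝ} (hz : 0 < z) :
    ‖boseReg z + 1 / 2 * (exp (-z) : ℂ)‖ ≤ 2 * z⁻¹ := by
  have hexp : ‖(1 / 2 * exp (-z) : ℂ)‖ ≤ z⁻¹ := by
    have hinv : (exp z)⁻¹ ≤ z⁻¹ := inv_anti₀ hz (by linarith [add_one_le_exp z])
    rw [norm_mul, Complex.norm_real, norm_of_nonneg (exp_pos _).le, exp_neg]
    norm_num
    linarith [inv_pos.mpr (exp_pos z)]
  linarith [norm_add_le (boseReg z) (1 / 2 * exp (-z)), norm_boseReg_le_inv hz]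

lemma norm_stirlingKernel_le {z : ℝ} (hz : 0 < z) :
    ‖stirlingKernel z‖ ≤ 10 * (1 + z ^ 2)⁻¹ := by
  rw [stirlingKernel, norm_div, Complex.norm_real, norm_of_nonneg hz.le, div_le_iff₀ hz,
    mul_right_comm, ← div_eq_mul_inv (10 * z), le_div_iff₀ (by positivity)]
  rcases le_total z 1 with h | h
  · nlinarith [norm_boseReg_add_half_mul_exp_le hz h]
  · calc ‖boseReg z + 1 / 2 * (exp (-z) : ℂ)‖ * (1 + z ^ 2) ≤ 2 * z⁻¹ * (1 + z ^ 2) := by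
          gcongr
          exact norm_boseReg_add_half_mul_exp_le_inv hz
      _ ≤ 10 * z := by
          field_simp
          nlinarith

lemma integrableOn_stirlingKernel : IntegrableOn stirlingKernel (Ioi 0) := by
  refine (integrable_inv_one_add_sq.const_mul 10).integrableOn.mono'
    (Measurable.aestronglyMeasurable (by unfold stirlingKernel; fun_prop)) ?_
  filter_upwards [ae_restrict_mem measurableSet_Ioi] with z hz using norm_stirlingKernel_le hz

lemma hasMellin_stirlingKernel {s : ℂ} (hs₁ : 1 < s.re) (hs₂ : s.re < 2) :
    HasMellin stirlingKernel s (Complex.Gamma (s - 1) * (riemannZeta (s - 1) + 1 / 2)) := by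
  have hphi := hasMellin_boseReg (s := s - 1) (by simpa using hs₁) (by simp; linarith)
  have hexp := hasMellin_exp_neg (s := s - 1) (by simpa using hs₁)
  have hhalf := hasMellin_const_smul hexp.1 (1 / 2 : ℂ)
  refine hasMellin_div_ofReal ?_
  convert hasMellin_add hphi.1 hhalf.1 using 1
  · rfl
  · rw [hphi.2, hhalf.2, hexp.2, smul_eq_mul]
    ring

lemma hasIntegralIoi_stirlingKernel :
    HasIntegralIoi stirlingKernel (-Complex.log (2 * π) / 2) := by
  refine hasIntegralIoi_of_tendsto_mellin (b := 3 / 2) integrableOn_stirlingKernel (by norm_num)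
    (hasMellin_stirlingKernel (by norm_num) (by norm_num)).1 ?_
  have hderiv := (differentiableAt_riemannZeta zero_ne_one).hasDerivAt
  rw [deriv_riemannZeta_zero, hasDerivAt_iff_tendsto_slope] at hderiv
  have hsub : Tendsto (fun x : ℝ ↦ x - 1) (nhdsWithin 1 (Ioi 1)) (nhdsWithin 0 (Ioi 0)) := by
    refine tendsto_nhdsWithin_iff.mpr ⟨?_, ?_⟩
    · exact ((continuous_sub_right (1 : ℝ)).tendsto' 1 0 (sub_self 1)).mono_left nhdsWithin_le_nhds
    · filter_upwards [self_mem_nhdsWithin] with x (hx : 1 < x) using sub_pos.mpr hx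
  have hlim := tendsto_Gamma_nhdsGT_one.mul
    (hderiv.comp ((by simpa using tendsto_ofReal_nhdsGT 0 : Tendsto _ _ _).comp hsub))
  rw [one_mul] at hlim
  refine hlim.congr' ?_
  filter_upwards [Ioo_mem_nhdsGT one_lt_two] with x hx
  have hne : (x : ℂ) - 1 ≠ 0 := sub_ne_zero.mpr (by exact_mod_cast hx.1.ne')
  have hGamma := Complex.Gamma_add_one _ hne
  rw [sub_add_cancel] at hGamma
  simp only [(hasMellin_stirlingKernel (s := x) (by simpa using hx.1) (by simpa using hx.2)).2,
    hGamma, Function.comp_apply, slope_def_field, riemannZeta_zero, Complex.ofReal_sub,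
    Complex.ofReal_one]
  field_simp
  ring

end Constants

section Remainder

/-- The integrand of `remainder`. -/
noncomputable def remainderKernel (p : ℂ) (z : ℝ) : ℂ := bose z * (boseReg (p * z) + 1 / 2)

/-- The remainder integral `X p = ∫ z in (0, ∞), B z * (φ (p * z) + 1 / 2)`, which is `O(p)` as `p`
tends to `0` inside a disc touching the imaginary axis there. -/
noncomputable def remainder (p : ℂ) : ℂ := ∫ z in Ioi (0 : ℝ), remainderKernel p z

lemma aestronglyMeasurable_remainderKernel (p : ℂ) {ν : Measure ℝ} :
    AEStronglyMeasurable (remainderKernel p) ν :=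
  Measurable.aestronglyMeasurable (by unfold remainderKernel; fun_prop)

lemma norm_remainderKernel_le {p : ℂ} (hp : 0 < p.re) {z : ℝ} (hz : 0 < z) :
    ‖remainderKernel p z‖ ≤ 4 * (1 + 2 * ‖p‖ ^ 2 / p.re) * ‖p‖ * exp (-(1 / 4) * z) := by
  have hnorm : ‖p * z‖ = ‖p‖ * z := by simp [abs_of_pos hz]
  have hre : (p * z).re = p.re * z := by simp
  have hphi := norm_boseReg_add_half_le (w := p * z) (by simpa using mul_pos hp hz)
  have hbose := norm_bose_mul_le hz
  have hlin : 1 ≤ exp (z / 4) ∧ z ≤ 4 * exp (z / 4) := by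
    have := add_one_le_exp (z / 4)
    constructor <;> linarith
  have hexp : exp (-(1 / 2) * z) * exp (z / 4) = exp (-(1 / 4) * z) := by
    rw [← exp_add]
    ring_nf
  calc ‖remainderKernel p z‖ ≤ ‖bose z‖ * (4 * ‖p * z‖ + 2 * ‖p * z‖ ^ 3 / (p * z).re) := by
        rw [remainderKernel, norm_mul]
        gcongr
    _ = ‖bose z‖ * z * (4 * ‖p‖ * 1 + 2 * ‖p‖ ^ 3 / p.re * z) := by
        rw [hnorm, hre]
        field_simp
    _ ≤ exp (-(1 / 2) * z) * (4 * ‖p‖ * exp (z / 4) + 2 * ‖p‖ ^ 3 / p.re * (4 * exp (z / 4))) := by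
        gcongr
        exacts [hlin.1, hlin.2]
    _ = 4 * (1 + 2 * ‖p‖ ^ 2 / p.re) * ‖p‖ * exp (-(1 / 4) * z) := by
        rw [← hexp]
        ring

lemma integrableOn_remainderKernel {p : ℂ} (hp : 0 < p.re) :
    IntegrableOn (remainderKernel p) (Ioi 0) := by
  refine ((integrableOn_exp_mul_Ioi (a := -(1 / 4)) (by norm_num) 0).const_mul
    (4 * (1 + 2 * ‖p‖ ^ 2 / p.re) * ‖p‖)).mono' (aestronglyMeasurable_remainderKernel p) ?_
  filter_upwards [ae_restrict_mem measurableSet_Ioi] with z hz using norm_remainderKernel_le hp hz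

lemma norm_remainder_le {p : ℂ} (hp : 0 < p.re) :
    ‖remainder p‖ ≤ 16 * (1 + 2 * ‖p‖ ^ 2 / p.re) * ‖p‖ := by
  calc ‖remainder p‖
      ≤ ∫ z in Ioi (0 : ℝ), 4 * (1 + 2 * ‖p‖ ^ 2 / p.re) * ‖p‖ * exp (-(1 / 4) * z) := by
        refine norm_integral_le_of_norm_le
          ((integrableOn_exp_mul_Ioi (by norm_num) 0).const_mul _) ?_
        filter_upwards [ae_restrict_mem measurableSet_Ioi] with z hz
        exact norm_remainderKernel_le hp hz
    _ = 16 * (1 + 2 * ‖p‖ ^ 2 / p.re) * ‖p‖ := by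
        rw [integral_const_mul, integral_exp_mul_Ioi (by norm_num)]
        simp only [mul_zero, exp_zero]
        ring

lemma differentiableOn_remainder : DifferentiableOn ℂ remainder {p | 0 < p.re} := by
  refine differentiableOn_integral_of_locally_dominated (isOpen_re_gt 0)
    (fun p _ ↦ aestronglyMeasurable_remainderKernel p) ?_ fun p₀ (hp₀ : 0 < p₀.re) ↦ ?_
  · filter_upwards [ae_restrict_mem measurableSet_Ioi] with z (hz : 0 < z) p (hp : 0 < p.re)
    have hphi : DifferentiableAt ℂ boseReg (p * z) :=
      differentiableAt_boseReg (by simpa using mul_pos hp hz)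
    exact ((hphi.comp p (f := fun p : ℂ ↦ p * z) (by fun_prop)).add_const _).const_mul _
      |>.differentiableWithinAt
  · have hcont : ContinuousAt (fun p : ℂ ↦ 4 * (1 + 2 * ‖p‖ ^ 2 / p.re) * ‖p‖) p₀ := by
      have hre := Complex.continuous_re.continuousAt (x := p₀)
      have hquot : ContinuousAt (fun p : ℂ ↦ 2 * ‖p‖ ^ 2 / p.re) p₀ :=
        ContinuousAt.div (by fun_prop) hre hp₀.ne'
      fun_prop
    refine ⟨_, inter_mem ((isOpen_re_gt 0).mem_nhds hp₀)
      (hcont.eventually_lt_const (lt_add_one _)),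
      fun z ↦ (4 * (1 + 2 * ‖p₀‖ ^ 2 / p₀.re) * ‖p₀‖ + 1) * exp (-(1 / 4) * z),
      (integrableOn_exp_mul_Ioi (by norm_num) 0).const_mul _, ?_⟩
    filter_upwards [ae_restrict_mem measurableSet_Ioi] with z hz p hp
    exact (norm_remainderKernel_le hp.1 hz).trans (by gcongr; exact hp.2.le)

lemma boseReg_mul_boseReg {l z : ℝ} (hl : 0 < l) (hz : 0 < z) :
    boseReg z * boseReg ((l * z : ℝ) : ℂ) =
      -(1 / (l * (1 + l))) * stirlingKernel z + -(l * l / (1 + l)) * stirlingKernel (l * z)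
      + eulerKernel ((1 + l) * z) + remainderKernel (1 + l) z
      + remainderKernel (1 + 1 / l) (l * z)
      + -(1 / 2) * eulerKernel z + -(1 / 2) * eulerKernel (l * z)
      + (1 / (2 * l * (1 + l)) - 1 / 2) *
        ((z⁻¹ * (exp (-(1 * z)) - exp (-((1 + l) * z))) : ℝ) : ℂ)
      + (l / (2 * (1 + l)) - 1 / (2 * l)) *
        ((z⁻¹ * (exp (-(l * z)) - exp (-((1 + l) * z))) : ℝ) : ℂ) := by
  have hz₀ : (z : ℂ) ≠ 0 := Complex.ofReal_ne_zero.mpr hz.ne'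
  have hl₀ : (l : ℂ) ≠ 0 := Complex.ofReal_ne_zero.mpr hl.ne'
  have hp₀ : (1 + l : ℂ) ≠ 0 := by exact_mod_cast (by positivity : 1 + l ≠ 0)
  have hmul := bose_mul_bose (z := z) (w := l * z) (by simpa using hz)
    (by simpa using mul_pos hl hz)
  rw [← one_add_mul] at hmul
  have hscale : (1 + 1 / l : ℂ) * ((l * z : ℝ) : ℂ) = (1 + l) * z := by
    push_cast
    field_simp
    ring
  simp only [remainderKernel, eulerKernel, stirlingKernel, boseReg, hscale, one_mul]
  push_cast
  generalize bose z = b₁ at *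
  generalize bose (l * z) = b₂ at *
  generalize bose ((1 + l) * z) = b₃ at *
  rw [sub_mul, mul_sub, hmul]
  field_simp
  ring

lemma boseCorr_eq {l : ℝ} (hl : 0 < l) :
    boseCorr l = (1 / l + l) / (1 + l) * (1 / 2 * log (2 * π)) + eulerMascheroniConstant / (1 + l)
      - eulerMascheroniConstant / 2 - eulerMascheroniConstant / (2 * l)
      + remainder (1 + l) + remainder (1 + 1 / l) / l
      + (1 / (2 * l * (1 + l)) - 1 / 2) * log (1 + l)
      + (l / (2 * (1 + l)) - 1 / (2 * l)) * (log (1 + l) - log l) := by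
  have hp : 0 < 1 + l := by linarith
  have hl₀ : (l : ℂ) ≠ 0 := Complex.ofReal_ne_zero.mpr hl.ne'
  have hp₀ : (1 + l : ℂ) ≠ 0 := by exact_mod_cast hp.ne'
  have hrem (p : ℂ) (hp : 0 < p.re) : HasIntegralIoi (remainderKernel p) (remainder p) :=
    ⟨integrableOn_remainderKernel hp, rfl⟩
  have hstirling := hasIntegralIoi_stirlingKernel
  have heuler := hasIntegralIoi_eulerKernel
  have hsum := (hstirling.const_mul (-(1 / (l * (1 + l)))))
    |>.add ((hstirling.comp_mul_left hl).const_mul (-(l * l / (1 + l))))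
    |>.add (heuler.comp_mul_left hp)
    |>.add (hrem (1 + l) (by simpa using hp))
    |>.add ((hrem (1 + 1 / l) (by simpa using by positivity)).comp_mul_left hl)
    |>.add (heuler.const_mul (-(1 / 2)))
    |>.add ((heuler.comp_mul_left hl).const_mul (-(1 / 2)))
    |>.add ((hasIntegralIoi_frullani_exp one_pos hp).ofReal.const_mul
      (1 / (2 * l * (1 + l)) - 1 / 2))
    |>.add ((hasIntegralIoi_frullani_exp hl hp).ofReal.const_mul
      (l / (2 * (1 + l)) - 1 / (2 * l)))
  have hlog : Complex.log (2 * π) = (log (2 * π) : ℂ) := by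
    rw [Complex.ofReal_log (by positivity)]
    push_cast
    rfl
  rw [boseCorr, mulCorr,
    setIntegral_congr_fun measurableSet_Ioi fun z hz ↦ boseReg_mul_boseReg hl hz]
  refine hsum.2.trans ?_
  rw [hlog, log_div hp.ne' hl.ne', div_one]
  simp only [Complex.real_smul]
  push_cast
  field_simp
  ring

end Remainder

section Continuation

lemma isOpen_abs_re_lt (a : ℝ) : IsOpen {θ : ℂ | |θ.re| < a} :=
  isOpen_lt (by fun_prop) continuous_const

lemma re_cos_pos {θ : ℂ} (hθ : |θ.re| < π / 2) : 0 < (Complex.cos θ).re := by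
  have hre : (Complex.cos θ).re = cos θ.re * cosh θ.im := by
    rw [Complex.cos_eq, ← Complex.ofReal_cos, ← Complex.ofReal_cosh, ← Complex.ofReal_sin,
      ← Complex.ofReal_sinh]
    simp [-Complex.ofReal_cos, -Complex.ofReal_cosh, -Complex.ofReal_sin, -Complex.ofReal_sinh]
  rw [hre]
  exact mul_pos (cos_pos_of_mem_Ioo (abs_lt.mp hθ)) (cosh_pos _)

/-- The two-sided Laplace transform of `zetaWeight`, at `2 * θ`. -/
noncomputable def weightLaplace (θ : ℂ) : ℂ := ∫ t : ℝ, zetaWeight t * Complex.exp (2 * θ * t)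

lemma aestronglyMeasurable_zetaWeight_mul_exp (θ : ℂ) :
    AEStronglyMeasurable fun t : ℝ ↦ (zetaWeight t : ℂ) * Complex.exp (2 * θ * t) := by
  have hmeas := continuous_zetaWeight
  fun_prop

lemma norm_zetaWeight_mul_exp_le {a : ℝ} {θ : ℂ} (hθ : |θ.re| ≤ a) (t : ℝ) :
    ‖(zetaWeight t : ℂ) * Complex.exp (2 * θ * t)‖ ≤
      4 * ((1 + |t|) ^ 2 * exp (-(π - 2 * a) * |t|)) := by
  have hre : (2 * θ * t).re ≤ 2 * a * |t| := by
    calc (2 * θ * t).re = 2 * (θ.re * t) := by simp [mul_assoc]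
      _ ≤ 2 * (|θ.re| * |t|) := by
          rw [← abs_mul]
          gcongr
          exact le_abs_self _
      _ ≤ 2 * a * |t| := by
          rw [mul_assoc]
          gcongr
  rw [norm_mul, Complex.norm_real, norm_of_nonneg (zetaWeight_nonneg t), Complex.norm_exp]
  calc zetaWeight t * exp (2 * θ * t).re
      ≤ 4 * ((1 + |t|) ^ 2 * exp (-π * |t|)) * exp (2 * a * |t|) := by
        gcongr
        exact zetaWeight_le t
    _ = 4 * ((1 + |t|) ^ 2 * (exp (-π * |t|) * exp (2 * a * |t|))) := by ring
    _ = 4 * ((1 + |t|) ^ 2 * exp (-(π - 2 * a) * |t|)) := by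
        rw [← exp_add]
        ring_nf

lemma differentiableOn_weightLaplace :
    DifferentiableOn ℂ weightLaplace {θ : ℂ | |θ.re| < π / 2} := by
  refine differentiableOn_integral_of_locally_dominated (isOpen_abs_re_lt _)
    (fun θ _ ↦ aestronglyMeasurable_zetaWeight_mul_exp θ)
    (.of_forall fun t ↦ by fun_prop) fun θ₀ hθ₀ ↦ ?_
  obtain ⟨a, ha₀, ha⟩ := exists_between (show |θ₀.re| < π / 2 from hθ₀)
  exact ⟨_, (isOpen_abs_re_lt a).mem_nhds ha₀, _,
    (integrable_one_add_abs_pow_mul_exp 2 (by linarith : 0 < π - 2 * a)).const_mul 4,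
    .of_forall fun t θ hθ ↦ norm_zetaWeight_mul_exp_le (le_of_lt hθ) t⟩

/-- The value of `weightLaplace` in terms of elementary functions and `remainder`. -/
noncomputable def closedForm (θ : ℂ) : ℂ :=
  (eulerMascheroniConstant + Complex.cos (2 * θ) * log (2 * π) - Complex.log (2 * Complex.cos θ)) /
      (2 * Complex.cos θ)
    + 2 * θ * Complex.sin θ - eulerMascheroniConstant * Complex.cos θ
    + Complex.exp (θ * Complex.I) * remainder (1 + Complex.exp (2 * θ * Complex.I))
    + Complex.exp (-(θ * Complex.I)) * remainder (1 + Complex.exp (-(2 * θ * Complex.I)))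

/-- An open set, containing the real interval `|x| < π / 2`, on which `weightLaplace` and
`closedForm` are both holomorphic. -/
def continuationDomain : Set ℂ :=
  {θ | |θ.re| < π / 2} ∩ ({θ | 0 < (1 + Complex.exp (2 * θ * Complex.I)).re} ∩
    {θ | 0 < (1 + Complex.exp (-(2 * θ * Complex.I))).re})

lemma isOpen_continuationDomain : IsOpen continuationDomain :=
  (isOpen_abs_re_lt _).inter ((isOpen_lt (by fun_prop) (by fun_prop)).inter
    (isOpen_lt (by fun_prop) (by fun_prop)))

lemma differentiableOn_closedForm : DifferentiableOn ℂ closedForm continuationDomain := by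
  intro θ ⟨hθ, hpos, hneg⟩
  have hcos : 0 < (2 * Complex.cos θ).re := by simpa using re_cos_pos hθ
  have hne : 2 * Complex.cos θ ≠ 0 := fun h ↦ hcos.ne' (by simp [h])
  have hrem {p : ℂ} (hp : 0 < p.re) : DifferentiableAt ℂ remainder p :=
    differentiableOn_remainder.differentiableAt ((isOpen_re_gt 0).mem_nhds hp)
  have hcosdiff : DifferentiableAt ℂ (fun θ : ℂ ↦ 2 * Complex.cos θ) θ := by fun_prop
  have hlog := hcosdiff.clog (Or.inl hcos)
  have hrem₁ : DifferentiableAt ℂ (fun θ ↦ remainder (1 + Complex.exp (2 * θ * Complex.I))) θ :=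
    DifferentiableAt.comp θ (g := remainder) (hrem hpos) (by fun_prop)
  have hrem₂ : DifferentiableAt ℂ (fun θ ↦ remainder (1 + Complex.exp (-(2 * θ * Complex.I)))) θ :=
    DifferentiableAt.comp θ (g := remainder) (hrem hneg) (by fun_prop)
  have hmain := DifferentiableAt.div (c := fun θ : ℂ ↦ eulerMascheroniConstant +
    Complex.cos (2 * θ) * log (2 * π) - Complex.log (2 * Complex.cos θ)) (by fun_prop) hcosdiff hne
  exact ((((hmain.add (by fun_prop)).sub (by fun_prop)).add (.mul (by fun_prop) hrem₁)).add
    (.mul (by fun_prop) hrem₂)).differentiableWithinAt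

lemma exp_neg_mul_I_mul_I (η : ℝ) :
    Complex.exp (-(η * Complex.I) * Complex.I) = Complex.exp η := by
  rw [neg_mul, mul_assoc, Complex.I_mul_I, mul_neg_one, neg_neg]

lemma weightLaplace_neg_mul_I (η : ℝ) :
    weightLaplace (-(η * Complex.I)) = Complex.exp η * boseCorr (exp (2 * η)) := by
  have hne : (exp (2 * η) : ℂ) ≠ 0 := Complex.ofReal_ne_zero.mpr (exp_pos _).ne'
  rw [boseCorr_eq_integral_zetaWeight (exp_pos _), ← integral_const_mul, weightLaplace]
  congr with t
  rw [Complex.cpow_def_of_ne_zero hne, ← Complex.ofReal_log (exp_pos _).le, log_exp, ← mul_assoc,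
    ← Complex.exp_add, mul_comm]
  congr 2
  push_cast
  ring

lemma log_one_add_exp_two_mul (η : ℝ) : log (1 + exp (2 * η)) = η + log (2 * cosh η) := by
  have hfactor : 1 + exp (2 * η) = exp η * (2 * cosh η) := by
    rw [cosh_eq, two_mul η, exp_add, exp_neg]
    field_simp
    ring
  rw [hfactor, log_mul (exp_pos _).ne' (mul_pos two_pos (cosh_pos _)).ne', log_exp]

lemma closedForm_neg_mul_I (η : ℝ) :
    closedForm (-(η * Complex.I)) = Complex.exp η * boseCorr (exp (2 * η)) := by
  set E := Complex.exp η with hE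
  have hE₀ : E ≠ 0 := Complex.exp_ne_zero _
  have hsq : (exp (2 * η) : ℂ) = E ^ 2 := by
    rw [hE, ← Complex.exp_nat_mul]
    push_cast
    rfl
  have hp₀ : 1 + E ^ 2 ≠ 0 := by
    rw [← hsq]
    exact_mod_cast (by positivity : 1 + exp (2 * η) ≠ 0)
  have hexp : Complex.exp (-(η * Complex.I) * Complex.I) = E := exp_neg_mul_I_mul_I η
  have hexp_two : Complex.exp (2 * -(η * Complex.I) * Complex.I) = E ^ 2 := by
    rw [← hexp, ← Complex.exp_nat_mul]
    push_cast
    ring_nf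
  have hlog : Complex.log (2 * Complex.cos (-(η * Complex.I))) = log (2 * cosh η) := by
    rw [Complex.cos_neg, Complex.cos_mul_I,
      Complex.ofReal_log (mul_pos two_pos (cosh_pos _)).le]
    push_cast
    rfl
  have hcos : Complex.cos (-(η * Complex.I)) = (1 + E ^ 2) / (2 * E) := by
    rw [Complex.cos, neg_mul (-_), Complex.exp_neg, hexp]
    field_simp
    ring
  have hcos_two : Complex.cos (2 * -(η * Complex.I)) = (E ^ 2 + (E ^ 2)⁻¹) / 2 := by
    rw [Complex.cos, neg_mul, Complex.exp_neg, hexp_two]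
  have hsin : 2 * -(η * Complex.I) * Complex.sin (-(η * Complex.I)) = η * (E⁻¹ - E) := by
    rw [Complex.sin, neg_mul (-_), Complex.exp_neg, hexp]
    linear_combination η * (E - E⁻¹) * Complex.I_sq
  rw [closedForm, hlog, hcos_two, hsin, hcos, hexp_two, hexp, Complex.exp_neg, Complex.exp_neg,
    hexp, hexp_two, boseCorr_eq (exp_pos _), log_one_add_exp_two_mul, log_exp, hsq, one_div]
  push_cast
  generalize remainder _ = X₁
  generalize remainder _ = X₂
  field_simp
  ring

lemma re_one_add_exp_mul_I (y : ℝ) : (1 + Complex.exp (y * Complex.I)).re = 1 + cos y := by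
  rw [Complex.add_re, Complex.exp_ofReal_mul_I_re, Complex.one_re]

lemma one_add_cos_two_mul_pos {x : ℝ} (hx : |x| < π / 2) : 0 < 1 + cos (2 * x) := by
  have hcos := cos_pos_of_mem_Ioo (abs_lt.mp hx)
  rw [cos_two_mul]
  nlinarith

lemma ofReal_mem_continuationDomain {x : ℝ} (hx : |x| < π / 2) : (x : ℂ) ∈ continuationDomain := by
  have hpos := one_add_cos_two_mul_pos hx
  have hneg := hpos
  rw [← cos_neg, ← re_one_add_exp_mul_I] at hneg
  rw [← re_one_add_exp_mul_I] at hpos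
  push_cast at hpos hneg
  rw [neg_mul] at hneg
  exact ⟨by simpa using hx, hpos, hneg⟩

lemma weightLaplace_eq_closedForm {x : ℝ} (hx : |x| < π / 2) : weightLaplace x = closedForm x := by
  have hsub : Complex.ofReal '' Ioo (-(π / 2)) (π / 2) ⊆ continuationDomain := by
    rintro _ ⟨x, hx, rfl⟩
    exact ofReal_mem_continuationDomain (abs_lt.mpr hx)
  have hweight := ((differentiableOn_weightLaplace.mono inter_subset_left).analyticOnNhd
    isOpen_continuationDomain).mono hsub
  have hclosed := (differentiableOn_closedForm.analyticOnNhd isOpen_continuationDomain).mono hsub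
  have hpre : IsPreconnected (Complex.ofReal '' Ioo (-(π / 2)) (π / 2)) :=
    isPreconnected_Ioo.image _ Complex.continuous_ofReal.continuousOn
  have hzero : (0 : ℂ) ∈ Complex.ofReal '' Ioo (-(π / 2)) (π / 2) :=
    ⟨0, ⟨by linarith [pi_pos], by linarith [pi_pos]⟩, Complex.ofReal_zero⟩
  have haxis : Tendsto (fun η : ℝ ↦ -(η * Complex.I)) (nhdsWithin 0 {0}ᶜ) (nhdsWithin 0 {0}ᶜ) := by
    refine tendsto_nhdsWithin_iff.mpr ⟨?_, ?_⟩
    · exact (Continuous.tendsto' (by fun_prop) 0 0 (by simp)).mono_left nhdsWithin_le_nhds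
    · filter_upwards [self_mem_nhdsWithin] with η hη
      simpa using hη
  exact hweight.eqOn_of_preconnected_of_frequently_eq hclosed hpre hzero
    (haxis.frequently (.of_forall fun η ↦
      (weightLaplace_neg_mul_I η).trans (closedForm_neg_mul_I η).symm))
    ⟨x, abs_lt.mp hx, rfl⟩

end Continuation

section MainTerm

lemma one_add_exp_two_mul_mul_I (x : ℝ) :
    1 + Complex.exp (2 * x * Complex.I) = (2 * cos x : ℝ) * Complex.exp (x * Complex.I) := by
  push_cast
  rw [Complex.two_cos, add_mul, ← Complex.exp_add, ← Complex.exp_add, neg_mul, neg_add_cancel,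
    Complex.exp_zero, ← two_mul, ← mul_assoc, add_comm]

lemma norm_remainder_one_add_exp_le {x : ℝ} (hx : |x| < π / 2) :
    ‖remainder (1 + Complex.exp (2 * x * Complex.I))‖ ≤ 160 * cos x := by
  have hcos := cos_pos_of_mem_Ioo (abs_lt.mp hx)
  have hpolar := one_add_exp_two_mul_mul_I x
  set p := 1 + Complex.exp (2 * x * Complex.I)
  have hnorm : ‖p‖ = 2 * cos x := by
    rw [hpolar, norm_mul, Complex.norm_real, norm_of_nonneg (by positivity),
      Complex.norm_exp_ofReal_mul_I, mul_one]
  have hre : p.re = 2 * cos x ^ 2 := by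
    rw [hpolar, Complex.re_ofReal_mul, Complex.exp_ofReal_mul_I_re]
    ring
  refine (norm_remainder_le (hre ▸ by positivity)).trans_eq ?_
  rw [hnorm, hre]
  field_simp
  norm_num

lemma integral_eq_integral_Ioi_add_comp_neg {f : ℝ → ℝ} (hf : Integrable f) :
    ∫ t, f t = ∫ t in Ioi 0, (f t + f (-t)) := by
  rw [integral_add hf.integrableOn hf.comp_neg.integrableOn, integral_comp_neg_Ioi, neg_zero,
    add_comm, intervalIntegral.integral_Iic_add_Ioi hf.integrableOn hf.integrableOn]

/-- The transform of `Z2` against `cosh (2 * x * t) / cosh (π * t)`, for `|x| < π / 2`. -/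
noncomputable def coshTransform (x : ℝ) : ℝ :=
  ∫ t in Ioi (0 : ℝ), Z2 t * (cosh (2 * x * t) / cosh (π * t))

lemma integrable_zetaWeight_mul_exp {x : ℝ} (hx : |x| < π / 2) :
    Integrable fun t : ℝ ↦ zetaWeight t * exp (2 * x * t) := by
  refine ((integrable_one_add_abs_pow_mul_exp 2 (c := π - 2 * |x|) (by linarith)).const_mul 4).mono'
    (continuous_zetaWeight.mul (by fun_prop)).aestronglyMeasurable (.of_forall fun t ↦ ?_)
  have hle := norm_zetaWeight_mul_exp_le (θ := x) (a := |x|) (by simp) t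
  rwa [← Complex.ofReal_ofNat, ← Complex.ofReal_mul, ← Complex.ofReal_mul, ← Complex.ofReal_exp,
    ← Complex.ofReal_mul, Complex.norm_real] at hle

lemma zetaWeight_mul_exp_add_comp_neg (x t : ℝ) :
    zetaWeight t * exp (2 * x * t) + zetaWeight (-t) * exp (2 * x * -t) =
      Z2 t * (cosh (2 * x * t) / cosh (π * t)) := by
  rw [zetaWeight, zetaWeight, Z2_neg, mul_neg, cosh_neg, mul_neg, cosh_eq (2 * x * t)]
  field_simp

lemma integrableOn_Z2_mul_cosh_div_cosh {x : ℝ} (hx : |x| < π / 2) :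
    IntegrableOn (fun t ↦ Z2 t * (cosh (2 * x * t) / cosh (π * t))) (Ioi 0) := by
  have hint := integrable_zetaWeight_mul_exp hx
  simp only [← zetaWeight_mul_exp_add_comp_neg]
  exact (hint.add hint.comp_neg).integrableOn

lemma weightLaplace_ofReal {x : ℝ} (hx : |x| < π / 2) : weightLaplace x = coshTransform x := by
  simp only [coshTransform, ← zetaWeight_mul_exp_add_comp_neg]
  rw [← integral_eq_integral_Ioi_add_comp_neg (integrable_zetaWeight_mul_exp hx),
    ← integral_complex_ofReal, weightLaplace]
  push_cast
  rfl

lemma abs_coshTransform_sub_le {x : ℝ} (hx : |x| < π / 2) :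
    |coshTransform x - ((eulerMascheroniConstant + cos (2 * x) * log (2 * π) - log (2 * cos x)) /
      (2 * cos x) + 2 * x * sin x - eulerMascheroniConstant * cos x)| ≤ 320 * cos x := by
  have hcos := cos_pos_of_mem_Ioo (abs_lt.mp hx)
  have hlog : Complex.log (2 * Complex.cos x) = (log (2 * cos x) : ℂ) := by
    rw [Complex.ofReal_log (by positivity)]
    push_cast
    rfl
  have hrem₁ := norm_remainder_one_add_exp_le hx
  have hrem₂ := norm_remainder_one_add_exp_le (x := -x) (by rwa [abs_neg])
  have hnorm₂ := Complex.norm_exp_ofReal_mul_I (-x)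
  rw [Complex.ofReal_neg, neg_mul] at hnorm₂
  rw [cos_neg, Complex.ofReal_neg, mul_neg, neg_mul] at hrem₂
  have hclosed := weightLaplace_eq_closedForm hx
  rw [weightLaplace_ofReal hx, closedForm, hlog] at hclosed
  rw [← norm_eq_abs, ← Complex.norm_real]
  push_cast
  rw [hclosed]
  calc _ = ‖Complex.exp (x * Complex.I) * remainder (1 + Complex.exp (2 * x * Complex.I))
        + Complex.exp (-(x * Complex.I)) * remainder (1 + Complex.exp (-(2 * x * Complex.I)))‖ := by
        congr 1
        ring
    _ ≤ 160 * cos x + 160 * cos x := by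
        refine norm_add_le_of_le ?_ ?_
        · rwa [norm_mul, Complex.norm_exp_ofReal_mul_I, one_mul]
        · rwa [norm_mul, hnorm₂, one_mul]
    _ = 320 * cos x := by ring

lemma abs_sub_log_div_sub_le (A : ℝ) {u v : ℝ} (hu : 0 < u) (huv : u ≤ v) :
    |(A - log u) / u - (A - log v) / v| ≤ (v - u) / u ^ 2 * (1 + |A - log v|) := by
  have hv : 0 < v := hu.trans_le huv
  have hlog_nonneg : 0 ≤ log v - log u := sub_nonneg.mpr (log_le_log hu huv)
  have hlog_le : log v - log u ≤ (v - u) / u := by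
    rw [← log_div hv.ne' hu.ne', sub_div, div_self hu.ne']
    exact log_le_sub_one_of_pos (div_pos hv hu)
  have _ : 0 ≤ v - u := sub_nonneg.mpr huv
  calc |(A - log u) / u - (A - log v) / v|
      = |(log v - log u) / u + (v - u) / (u * v) * (A - log v)| := by
        congr 1
        field_simp
        ring
    _ ≤ (log v - log u) / u + (v - u) / (u * v) * |A - log v| := by
        refine (abs_add_le _ _).trans_eq ?_
        rw [abs_of_nonneg (by positivity), abs_mul, abs_of_nonneg (a := (v - u) / (u * v))
          (by positivity)]
    _ ≤ (v - u) / u / u + (v - u) / (u * u) * |A - log v| := by gcongr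
    _ = (v - u) / u ^ 2 * (1 + |A - log v|) := by
        field_simp

lemma log_two_mul_pi_mem_Icc : log (2 * π) ∈ Icc 0 2 := by
  refine ⟨log_nonneg (by linarith [pi_gt_three]), (log_le_iff_le_exp (by positivity)).mpr ?_⟩
  have hexp : exp 2 = exp 1 * exp 1 := by
    rw [← exp_add]
    norm_num
  rw [hexp]
  nlinarith [exp_one_gt_d9, pi_lt_d2]

lemma one_le_neg_log {d : ℝ} (hd : 0 < d) (hd₁ : d ≤ 1 / 3) : 1 ≤ -log d := by
  rw [← log_inv, le_log_iff_exp_le (by positivity), le_inv_comm₀ (exp_pos 1) hd]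
  exact hd₁.trans (by rw [one_div]; exact inv_anti₀ (exp_pos 1) exp_one_lt_three.le)

lemma abs_sub_log_sin_div_sub_le {d : ℝ} (hd : 0 < d) (hd₁ : d ≤ 1 / 3) :
    |(eulerMascheroniConstant - log (2 * π) - log (2 * sin d)) / (2 * sin d) -
      (eulerMascheroniConstant - log (2 * π) - log (2 * d)) / (2 * d)| ≤ 6 * (d * -log d) := by
  obtain ⟨hpi_nonneg, hpi_le⟩ := log_two_mul_pi_mem_Icc
  have hD := one_le_neg_log hd hd₁
  have hsin_le : sin d ≤ d := (sin_lt hd).le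
  have hsin_cube := sin_gt_sub_cube hd
  have hsin_ge : 3 / 4 * d ≤ sin d := by nlinarith [pow_pos hd 3, pow_pos hd 2]
  have hsin : 0 < sin d := by linarith
  have hratio : (2 * d - 2 * sin d) / (2 * sin d) ^ 2 ≤ d := by
    rw [div_le_iff₀ (by positivity)]
    calc 2 * d - 2 * sin d ≤ d * (2 * (3 / 4 * d)) ^ 2 := by nlinarith [pow_pos hd 3]
      _ ≤ d * (2 * sin d) ^ 2 := by gcongr
  have habs : |eulerMascheroniConstant - log (2 * π) - log (2 * d)| ≤ 5 * -log d := by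
    rw [log_mul two_ne_zero hd.ne', abs_le]
    constructor <;> linarith [log_two_lt_d9, log_two_gt_d9, one_half_lt_eulerMascheroniConstant,
      eulerMascheroniConstant_lt_two_thirds]
  calc _ ≤ (2 * d - 2 * sin d) / (2 * sin d) ^ 2 *
        (1 + |eulerMascheroniConstant - log (2 * π) - log (2 * d)|) :=
        abs_sub_log_div_sub_le _ (by positivity) (by linarith)
    _ ≤ d * (-log d + 5 * -log d) := by gcongr
    _ = 6 * (d * -log d) := by ring

lemma abs_pi_sub_two_mul_mul_cos_sub_pi_le {d : ℝ} (hd : 0 ≤ d) (hd₁ : d ≤ 1) :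
    |(π - 2 * d) * cos d - π| ≤ 6 * d := by
  have hcos_le := cos_le_one d
  have hcos_ge := one_sub_sq_div_two_le_cos (x := d)
  have hpi := pi_lt_four
  have hpi₃ := pi_gt_three
  rw [abs_le]
  constructor <;> nlinarith

lemma abs_coshTransform_pi_div_two_sub_sub_le {d : ℝ} (hd : 0 < d) (hd₁ : d ≤ 1 / 3) :
    |coshTransform (π / 2 - d) -
      ((eulerMascheroniConstant - log (2 * π) - log (2 * d)) / (2 * d) + π)| ≤
      334 * (d * -log d) := by
  have hpi := pi_gt_three
  have hsin : 0 < sin d := sin_pos_of_pos_of_lt_pi hd (by linarith)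
  have hsin_le : sin d ≤ d := (sin_lt hd).le
  obtain ⟨hpi_nonneg, hpi_le⟩ := log_two_mul_pi_mem_Icc
  have hclosed := abs_coshTransform_sub_le (x := π / 2 - d)
    (abs_lt.mpr ⟨by linarith, by linarith⟩)
  rw [cos_pi_div_two_sub, sin_pi_div_two_sub, mul_sub, mul_div_cancel₀ π two_ne_zero, cos_pi_sub,
    cos_two_mul, cos_sq'] at hclosed
  have hsplit : (eulerMascheroniConstant + -(2 * (1 - sin d ^ 2) - 1) * log (2 * π) -
      log (2 * sin d)) / (2 * sin d) =
      (eulerMascheroniConstant - log (2 * π) - log (2 * sin d)) / (2 * sin d) +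
        log (2 * π) * sin d := by
    field_simp
    ring
  have hlinear : |(log (2 * π) - eulerMascheroniConstant) * sin d| ≤ 2 * d := by
    rw [abs_mul, abs_of_pos hsin]
    gcongr
    rw [abs_le]
    constructor <;> linarith [one_half_lt_eulerMascheroniConstant,
      eulerMascheroniConstant_lt_two_thirds]
  have hdlog : d ≤ d * -log d := le_mul_of_one_le_right hd.le (one_le_neg_log hd hd₁)
  have hsing := abs_le.mp (abs_sub_log_sin_div_sub_le hd hd₁)
  have hcos := abs_le.mp (abs_pi_sub_two_mul_mul_cos_sub_pi_le hd.le (by linarith))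
  rw [hsplit, abs_le] at hclosed
  rw [abs_le] at hlinear ⊢
  constructor <;> linarith

end MainTerm

section LaplaceTransform

/-- The one-sided Laplace transform of `Z2`, at `2 * d`. -/
noncomputable def zetaLaplace (d : ℝ) : ℝ := ∫ t in Ioi (0 : ℝ), Z2 t * exp (-(2 * d) * t)

lemma integrableOn_Z2_mul_exp {c : ℝ} (hc : 0 < c) :
    IntegrableOn (fun t ↦ Z2 t * exp (-c * t)) (Ioi 0) := by
  refine ((integrable_one_add_abs_pow_mul_exp 2 hc).const_mul 4).integrableOn.mono'
    (continuous_Z2.mul (by fun_prop)).aestronglyMeasurable ?_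
  filter_upwards [ae_restrict_mem measurableSet_Ioi] with t (ht : 0 < t)
  rw [norm_of_nonneg (mul_nonneg (Z2_nonneg t) (exp_pos _).le), ← mul_assoc, abs_of_pos ht]
  gcongr
  simpa only [abs_of_pos ht] using Z2_le t

lemma sinh_le_mul_exp (b : ℝ) : sinh b ≤ b * exp b := by
  have hexp := add_one_le_exp (-(2 * b))
  have hneg : exp (-b) = exp b * exp (-(2 * b)) := by
    rw [← exp_add]
    ring_nf
  rw [sinh_eq, hneg]
  nlinarith [exp_pos b]

lemma cosh_sub_div_cosh_sub_exp_neg (a b : ℝ) :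
    cosh (a - b) / cosh a - exp (-b) = sinh b * exp (-a) / cosh a := by
  have hcosh : cosh a ≠ 0 := (cosh_pos a).ne'
  field_simp
  rw [cosh_sub, ← cosh_sub_sinh, ← cosh_sub_sinh]
  ring

lemma abs_cosh_sub_div_cosh_sub_exp_neg_le {b : ℝ} (a : ℝ) (hb : 0 ≤ b) :
    |cosh (a - b) / cosh a - exp (-b)| ≤ 2 * b * exp (b - 2 * a) := by
  have _ : 0 ≤ sinh b := sinh_nonneg_iff.mpr hb
  have hcosh : 0 < cosh a := cosh_pos a
  have hexp : exp a ≤ 2 * cosh a := by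
    rw [cosh_eq]
    linarith [exp_pos (-a)]
  rw [cosh_sub_div_cosh_sub_exp_neg, abs_of_nonneg (by positivity), div_le_iff₀ hcosh]
  calc sinh b * exp (-a) ≤ b * exp b * exp (-a) := by
        gcongr
        exact sinh_le_mul_exp b
    _ = b * exp (b - 2 * a) * exp a := by
        rw [mul_assoc, mul_assoc, ← exp_add, ← exp_add]
        ring_nf
    _ ≤ b * exp (b - 2 * a) * (2 * cosh a) := by gcongr
    _ = 2 * b * exp (b - 2 * a) * cosh a := by ring

lemma abs_Z2_mul_cosh_div_cosh_sub_le {d t : ℝ} (hd : 0 ≤ d) (hd₁ : d ≤ 1 / 2) (ht : 0 ≤ t) :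
    |Z2 t * (cosh (2 * (π / 2 - d) * t) / cosh (π * t)) - Z2 t * exp (-(2 * d) * t)| ≤
      16 * d * ((1 + |t|) ^ 3 * exp (-5 * |t|)) := by
  have hexp : 2 * d * t - 2 * (π * t) ≤ -5 * t := by nlinarith [pi_gt_three]
  rw [← mul_sub, abs_mul, abs_of_nonneg (Z2_nonneg t)]
  calc Z2 t * |cosh (2 * (π / 2 - d) * t) / cosh (π * t) - exp (-(2 * d) * t)|
      = Z2 t * |cosh (π * t - 2 * d * t) / cosh (π * t) - exp (-(2 * d * t))| := by ring_nf
    _ ≤ 4 * (1 + |t|) ^ 2 * (2 * (2 * d * t) * exp (2 * d * t - 2 * (π * t))) := by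
        gcongr
        exacts [Z2_le t, abs_cosh_sub_div_cosh_sub_exp_neg_le _ (by positivity)]
    _ ≤ 4 * (1 + |t|) ^ 2 * (2 * (2 * d * (1 + |t|)) * exp (-5 * |t|)) := by
        rw [abs_of_nonneg ht]
        gcongr
        linarith
    _ = 16 * d * ((1 + |t|) ^ 3 * exp (-5 * |t|)) := by ring

lemma exists_abs_coshTransform_sub_zetaLaplace_le :
    ∃ C : ℝ, 0 ≤ C ∧ ∀ d : ℝ, 0 < d → d ≤ 1 / 3 →
      |coshTransform (π / 2 - d) - zetaLaplace d| ≤ C * d := by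
  refine ⟨16 * ∫ t in Ioi (0 : ℝ), (1 + |t|) ^ 3 * exp (-5 * |t|),
    mul_nonneg (by norm_num) (integral_nonneg fun t ↦ by positivity), fun d hd hd₁ ↦ ?_⟩
  have hx : |π / 2 - d| < π / 2 := abs_lt.mpr ⟨by linarith [pi_gt_three], by linarith⟩
  rw [coshTransform, zetaLaplace, ← integral_sub (integrableOn_Z2_mul_cosh_div_cosh hx)
    (integrableOn_Z2_mul_exp (by positivity)), ← norm_eq_abs, mul_right_comm, ← integral_const_mul]
  refine norm_integral_le_of_norm_le
    ((integrable_one_add_abs_pow_mul_exp 3 (by norm_num)).integrableOn.const_mul _) ?_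
  filter_upwards [ae_restrict_mem measurableSet_Ioi] with t ht
  exact abs_Z2_mul_cosh_div_cosh_sub_le hd.le (by linarith) (le_of_lt ht)

lemma exists_abs_zetaLaplace_inv_sub_le :
    ∃ C : ℝ, 0 < C ∧ ∀ y : ℝ, 3 ≤ y →
      |zetaLaplace y⁻¹ - ((y / 2) * log (y / 2) +
        (eulerMascheroniConstant - log (2 * π)) * (y / 2) + π)| ≤ C * log y / y := by
  obtain ⟨C, hC, hdiff⟩ := exists_abs_coshTransform_sub_zetaLaplace_le
  refine ⟨C + 334, by positivity, fun y hy ↦ ?_⟩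
  have hy₀ : 0 < y := by linarith
  have hd : 0 < y⁻¹ := inv_pos.mpr hy₀
  have hd₁ : y⁻¹ ≤ 1 / 3 := by
    rw [one_div]
    gcongr
  have hlog : 1 ≤ log y := by simpa using one_le_neg_log hd hd₁
  have hmain := abs_coshTransform_pi_div_two_sub_sub_le hd hd₁
  rw [show 2 * y⁻¹ = (y / 2)⁻¹ by rw [inv_div, div_eq_mul_inv], log_inv, log_inv, div_inv_eq_mul,
    neg_neg, sub_neg_eq_add, add_mul] at hmain
  calc _ = |(coshTransform (π / 2 - y⁻¹) - ((eulerMascheroniConstant - log (2 * π)) * (y / 2) +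
        log (y / 2) * (y / 2) + π)) - (coshTransform (π / 2 - y⁻¹) - zetaLaplace y⁻¹)| := by
        congr 1
        ring
    _ ≤ 334 * (y⁻¹ * log y) + C * y⁻¹ := (abs_sub _ _).trans (add_le_add hmain (hdiff _ hd hd₁))
    _ ≤ 334 * (y⁻¹ * log y) + C * (y⁻¹ * log y) := by
        gcongr
        exact le_mul_of_one_le_right hd.le hlog
    _ = (C + 334) * log y / y := by ring

lemma Z2_mul_exp_le_of_mul_log_le {y t : ℝ} (hy : 1 ≤ y) (ht : 5 * y * log y ≤ t) :
    Z2 t * exp (-(2 * y⁻¹) * t) ≤ 288 * y⁻¹ * (1 + t ^ 2)⁻¹ := by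
  have hy₀ : 0 < y := by linarith
  have ht₀ : 0 ≤ t := (mul_nonneg (by positivity) (log_nonneg hy)).trans ht
  have hpoly := one_add_pow_mul_exp_le 2 (inv_pos.mpr hy₀) ht₀
  have hsplit : exp (-(2 * y⁻¹) * t) = exp (-y⁻¹ * t) * exp (-y⁻¹ * t) := by
    rw [← exp_add]
    ring_nf
  have hdecay : exp (-y⁻¹ * t) ≤ (y ^ 5)⁻¹ := by
    rw [← exp_log (pow_pos hy₀ 5), ← exp_neg, log_pow, exp_le_exp, neg_mul, neg_le_neg_iff,
      ← div_eq_inv_mul, le_div_iff₀ hy₀]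
    push_cast
    linarith
  have hexp : exp y⁻¹ ≤ 3 := (exp_le_exp.mpr (inv_le_one_of_one_le₀ hy)).trans
    exp_one_lt_three.le
  calc Z2 t * exp (-(2 * y⁻¹) * t)
      ≤ 4 * (1 + t) ^ 2 * exp (-(2 * y⁻¹) * t) := by
        gcongr
        simpa only [abs_of_nonneg ht₀] using Z2_le t
    _ = 4 * ((1 + t) ^ 2 * exp (-y⁻¹ * t)) * exp (-y⁻¹ * t) := by
        rw [hsplit]
        ring
    _ ≤ 4 * ((2 + 2).factorial * exp y⁻¹ / y⁻¹ ^ (2 + 2) * (1 + t ^ 2)⁻¹) * (y ^ 5)⁻¹ := by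
        gcongr 4 * ?_ * ?_
    _ ≤ 4 * ((2 + 2).factorial * 3 / y⁻¹ ^ (2 + 2) * (1 + t ^ 2)⁻¹) * (y ^ 5)⁻¹ := by gcongr
    _ = 288 * y⁻¹ * (1 + t ^ 2)⁻¹ := by
        norm_num [Nat.factorial]
        field_simp
        norm_num

lemma setIntegral_Ioi_Z2_mul_exp_le {y m : ℝ} (hy : 1 ≤ y) (hm : 5 * y * log y ≤ m) :
    ∫ t in Ioi m, Z2 t * exp (-(2 * y⁻¹) * t) ≤ 288 * π * y⁻¹ := by
  have hm₀ : 0 ≤ m := (mul_nonneg (by positivity) (log_nonneg hy)).trans hm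
  have hdom : Integrable fun t : ℝ ↦ 288 * y⁻¹ * (1 + t ^ 2)⁻¹ :=
    integrable_inv_one_add_sq.const_mul _
  calc ∫ t in Ioi m, Z2 t * exp (-(2 * y⁻¹) * t)
      ≤ ∫ t in Ioi m, 288 * y⁻¹ * (1 + t ^ 2)⁻¹ :=
        setIntegral_mono_on ((integrableOn_Z2_mul_exp (by positivity)).mono_set
          (Ioi_subset_Ioi hm₀)) hdom.integrableOn measurableSet_Ioi
          fun t ht ↦ Z2_mul_exp_le_of_mul_log_le hy (hm.trans (le_of_lt ht))
    _ ≤ ∫ t, 288 * y⁻¹ * (1 + t ^ 2)⁻¹ :=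
        setIntegral_le_integral hdom (.of_forall fun t ↦ by positivity)
    _ = 288 * π * y⁻¹ := by
        rw [integral_const_mul, integral_univ_inv_one_add_sq]
        ring

lemma abs_integral_Z2_mul_exp_sub_zetaLaplace_le {y m : ℝ} (hy : 1 ≤ y) (hm : 5 * y * log y ≤ m) :
    |(∫ t in (0 : ℝ)..m, Z2 t * exp (-2 * t / y)) - zetaLaplace y⁻¹| ≤ 288 * π * y⁻¹ := by
  have hm₀ : 0 ≤ m := (mul_nonneg (by positivity) (log_nonneg hy)).trans hm
  have hint := integrableOn_Z2_mul_exp (c := 2 * y⁻¹) (by positivity)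
  have hexp (t : ℝ) : exp (-2 * t / y) = exp (-(2 * y⁻¹) * t) := by ring_nf
  simp only [hexp]
  rw [zetaLaplace, ← intervalIntegral.integral_interval_add_Ioi hint
    (hint.mono_set (Ioi_subset_Ioi hm₀)), sub_add_cancel_left, abs_neg, abs_of_nonneg
    (integral_nonneg fun t ↦ mul_nonneg (Z2_nonneg t) (exp_pos _).le)]
  exact setIntegral_Ioi_Z2_mul_exp_le hy hm

end LaplaceTransform

end HardyLittlewood

open HardyLittlewood in
theorem lemma2_hardy_littlewood_M_general :
    ∃ C : ℝ, 0 < C ∧ ∀ y m : ℝ, 3 ≤ y → 5 * y * log y ≤ m →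
      |(∫ t in (0 : ℝ)..m, Z2 t * exp (-2 * t / y)) - ((y / 2) * log (y / 2) +
        (eulerMascheroniConstant - log (2 * π)) * (y / 2) + π)| ≤ C * log y / y := by
  obtain ⟨C, hC, hmain⟩ := exists_abs_zetaLaplace_inv_sub_le
  refine ⟨288 * π + C, by positivity, fun y m hy hm ↦ ?_⟩
  have hlog : 1 ≤ log y := (le_log_iff_exp_le (by linarith)).mpr
    (exp_one_lt_three.le.trans hy)
  calc _ ≤ 288 * π * y⁻¹ + C * log y / y :=
        (abs_sub_le _ _ _).trans (add_le_add
          (abs_integral_Z2_mul_exp_sub_zetaLaplace_le (by linarith) hm) (hmain y hy))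
    _ ≤ 288 * π * y⁻¹ * log y + C * log y / y := by
        gcongr ?_ + _
        exact le_mul_of_one_le_right (by positivity) hlog
    _ = (288 * π + C) * log y / y := by ring

/-- (Lemma 2)  There exist constants `c₀ ∈ ℝ` and `C > 0` (absolute, not depending on `μ`) such
that for every `μ` in the admissible class with associated function `M = M_μ`, for all
sufficiently large `y`:
`|∫₀^{M(y)} |ζ(1/2+it)|² dt − F(y)| ≤ C (ln y)/y`, where
`F(y) = (y/2) ln(y/2) + (c − ln 2π)(y/2) + c₀` and `c` is the Euler–Mascheroni constant. -/
theorem lemma2_hardy_littlewood_M :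
    ∃ c₀ C : ℝ, 0 < C ∧
      ∀ (y₀ : ℝ) (μ M : ℝ → ℝ),
        ContDiffOn ℝ (⊤ : ℕ∞) μ (Set.Ici y₀) →
        StrictMonoOn μ (Set.Ici y₀) →
        Tendsto μ atTop atTop →
        (∀ y ∈ Set.Ici y₀, 0 < μ y) →
        (∀ y ∈ Set.Ici y₀, 7 * y * Real.log y ≤ μ y) →
        (∀ y ∈ Set.Ici y₀, 0 < M y) →
        (∀ y ∈ Set.Ici y₀,
          (∫ t in (0:ℝ)..μ y, Z2 t * Real.exp (-2 * t / y)) = ∫ t in (0:ℝ)..M y, Z2 t) →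
        ∀ᶠ y in atTop,
          |(∫ t in (0:ℝ)..M y, Z2 t)
              - ((y/2) * Real.log (y/2)
                 + (Real.eulerMascheroniConstant - Real.log (2*Real.pi)) * (y/2) + c₀)|
            ≤ C * Real.log y / y := by
  obtain ⟨C, hC, hmain⟩ := lemma2_hardy_littlewood_M_general
  refine ⟨π, C, hC, fun y₀ μ M _ _ _ _ hμ _ hM ↦ ?_⟩
  filter_upwards [eventually_ge_atTop y₀, eventually_ge_atTop 3] with y hy hy₃
  rw [← hM y hy]
  have hylog : 0 ≤ y * log y := mul_nonneg (by linarith) (log_nonneg (by linarith))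
  exact hmain y (μ y) hy₃ (by linarith [hμ y hy])
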